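/- Let ρ : ℝ^n → (0,∞) be a 1/2-Lipschitz function (with ℝ^n equipped with the Euclidean norm) for which there exist constants 0 < ε ≤ 1, m > 0, R > 0 with m ≤ ρ(x) ≤ R⟨x⟩^{1−ε} for all x ∈ ℝ^n. Let ω ⊂ ℝ^n be a measurable subset which is γ-thick with respect to the density ρ for some 0 < γ ≤ 1. Then there exist positive constants κ > 0 and C̃ > 0 (depending on n, m, R, γ, ε) and a positive constant κ̃ > 1 depending only on the dimension n such that for every integer N ≥ 1 and every f ∈ E_N, ‖f‖_{L²(ℝ^n)} ≤ κ (κ̃/γ)^{C̃ N^{1−ε/2}} ‖f‖_{L²(ω)}. -/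

import Mathlib

open MeasureTheory
open scoped BigOperators ENNReal NNReal

noncomputable section

abbrev En (n : ℕ) := EuclideanSpace ℝ (Fin n)

/-- One-dimensional Hermite function. -/
def hermite1 (k : ℕ) (x : ℝ) : ℝ :=
  (-1 : ℝ) ^ k * ((2 ^ k * (k.factorial : ℝ) * Real.sqrt Real.pi) ^ (-(1/2 : ℝ))) *
    Real.exp (x ^ 2 / 2) * iteratedDeriv k (fun y => Real.exp (-y ^ 2)) x

/-- Tensorized Hermite function on ℝⁿ. -/
def hermiteFun (n : ℕ) (α : Fin n → ℕ) (x : En n) : ℂ :=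
  ∏ j, (hermite1 (α j) (x j) : ℂ)

/-- The span E_N of Hermite functions with |α| ≤ N. -/
def hermiteSpan (n N : ℕ) : Submodule ℂ (En n → ℂ) :=
  Submodule.span ℂ {g | ∃ α : Fin n → ℕ, (∑ j, α j) ≤ N ∧ g = hermiteFun n α}

/-- Japanese bracket ⟨x⟩. -/
def jap (n : ℕ) (x : En n) : ℝ := Real.sqrt (1 + ‖x‖ ^ 2)

/-- γ-thickness with respect to a density ρ. -/
def ThickWith (n : ℕ) (γ : ℝ) (ρ : En n → ℝ) (ω : Set (En n)) : Prop :=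
  ∀ x : En n,
    ENNReal.ofReal γ * volume (Metric.ball x (ρ x)) ≤ volume (ω ∩ Metric.ball x (ρ x))

/-- L² norm on ℝⁿ. -/
def L2norm (n : ℕ) (f : En n → ℂ) : ℝ := Real.sqrt (∫ x, ‖f x‖ ^ 2)

/-- L² norm on a subset ω. -/
def L2normOn (n : ℕ) (ω : Set (En n)) (f : En n → ℂ) : ℝ :=
  Real.sqrt (∫ x in ω, ‖f x‖ ^ 2)

lemma gaussC_contDiff : ContDiff ℝ (⊤ : ℕ∞) (fun y : ℝ => Real.exp (-y ^ 2)) := by fun_prop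

lemma gaussC_hasDeriv (k : ℕ) (x : ℝ) :
    HasDerivAt (iteratedDeriv k (fun y : ℝ => Real.exp (-y ^ 2)))
      (iteratedDeriv (k+1) (fun y : ℝ => Real.exp (-y ^ 2)) x) x := by
  rw [iteratedDeriv_succ]
  apply DifferentiableAt.hasDerivAt
  have := gaussC_contDiff.differentiable_iteratedDeriv k (by exact_mod_cast ENat.natCast_lt_top k)
  exact this x

lemma gaussC_rec (k : ℕ) : ∀ x : ℝ,
    iteratedDeriv (k+2) (fun y : ℝ => Real.exp (-y ^ 2)) x
     = -2 * x * iteratedDeriv (k+1) (fun y : ℝ => Real.exp (-y ^ 2)) x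
       - 2 * (k+1) * iteratedDeriv k (fun y : ℝ => Real.exp (-y ^ 2)) x := by
  have h1 : ∀ x : ℝ, iteratedDeriv 1 (fun y : ℝ => Real.exp (-y ^ 2)) x
      = -2 * x * iteratedDeriv 0 (fun y : ℝ => Real.exp (-y ^ 2)) x := by
    intro x
    rw [iteratedDeriv_one, iteratedDeriv_zero]
    have : HasDerivAt (fun y : ℝ => Real.exp (-y ^ 2)) (Real.exp (-x^2) * (-(2 * x))) x := by
      have h := ((hasDerivAt_id x).pow 2).neg.exp
      simpa using h
    rw [this.deriv]; ring
  induction k with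
  | zero =>
    intro x
    have hA := gaussC_hasDeriv 1 x
    have h0 := gaussC_hasDeriv 0 x
    have e : iteratedDeriv 1 (fun y : ℝ => Real.exp (-y ^ 2)) =
        fun x => -2 * x * iteratedDeriv 0 (fun y : ℝ => Real.exp (-y ^ 2)) x := funext h1
    rw [e] at hA
    have hB := (((hasDerivAt_id x).const_mul (-2)).mul h0)
    have := hA.unique hB
    simp only [id] at this
    simp only [zero_add] at this ⊢
    rw [show (1+1:ℕ) = 2 from rfl] at this
    rw [this]; push_cast; ring
  | succ k ih =>
    intro x
    have hA := gaussC_hasDeriv (k+2) x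
    have e : iteratedDeriv (k+2) (fun y : ℝ => Real.exp (-y ^ 2)) = _ := funext ih
    rw [e] at hA
    have hB := (((hasDerivAt_id x).const_mul (-2)).mul (gaussC_hasDeriv (k+1) x)).sub
      ((gaussC_hasDeriv k x).const_mul (2 * ((k:ℝ)+1)))
    have := hA.unique hB
    simp only [id] at this
    rw [show k + 1 + 2 = k + 2 + 1 by ring, this]; push_cast
    ring_nf

def hcoef (k : ℕ) : ℝ := ((2 ^ k * (k.factorial : ℝ) * Real.sqrt Real.pi) ^ (-(1/2 : ℝ)))

lemma hcoef_succ (k : ℕ) : hcoef k = Real.sqrt (2 * (k+1)) * hcoef (k+1) := by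
  unfold hcoef
  have hpi : 0 < Real.sqrt Real.pi := Real.sqrt_pos.2 Real.pi_pos
  rw [Real.sqrt_eq_rpow (2 * ((k:ℝ)+1))]
  have h2 : (2:ℝ) ^ (k+1) * ((k+1).factorial : ℝ) * Real.sqrt Real.pi
     = (2 * (k+1)) * (2 ^ k * (k.factorial : ℝ) * Real.sqrt Real.pi) := by
    rw [Nat.factorial_succ]; push_cast; ring
  rw [h2, Real.mul_rpow (x := 2 * ((k:ℝ)+1)) (by positivity) (by positivity), ← mul_assoc,
    ← Real.rpow_add (by positivity)]
  norm_num

lemma hermite1_eq (k : ℕ) (x : ℝ) : hermite1 k x = (-1 : ℝ) ^ k * hcoef k *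
    Real.exp (x ^ 2 / 2) * iteratedDeriv k (fun y => Real.exp (-y ^ 2)) x := rfl

lemma hermite1_deriv0 (k : ℕ) (x : ℝ) : HasDerivAt (hermite1 k)
    (x * hermite1 k x - Real.sqrt (2 * (k+1)) * hermite1 (k+1) x) x := by
  have hE : HasDerivAt (fun x : ℝ => Real.exp (x^2/2)) (Real.exp (x^2/2) * x) x := by
    have h := (((hasDerivAt_id x).pow 2).div_const 2).exp
    refine h.congr_deriv ?_
    simp
  have h := (hE.const_mul ((-1 : ℝ) ^ k * hcoef k)).mul (gaussC_hasDeriv k x)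
  have e : hermite1 k = (fun x => (-1 : ℝ) ^ k * hcoef k * Real.exp (x ^ 2 / 2)) *
     iteratedDeriv k (fun y => Real.exp (-y ^ 2)) := by
    funext x; simp [hermite1_eq]
  rw [e]
  refine h.congr_deriv ?_
  rw [hermite1_eq (k+1), Pi.mul_apply]
  rw [hcoef_succ k]; ring

lemma hermite1_rec0 (k : ℕ) (x : ℝ) :
    Real.sqrt (2 * (k+2)) * hermite1 (k+2) x = 2 * x * hermite1 (k+1) x
      - Real.sqrt (2 * (k+1)) * hermite1 k x := by
  rw [hermite1_eq, hermite1_eq, hermite1_eq, gaussC_rec, hcoef_succ k, hcoef_succ (k+1)]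
  have h1 : Real.sqrt (2 * (k+1)) * Real.sqrt (2 * ((k:ℝ)+1)) = 2 * (k+1) :=
    Real.mul_self_sqrt (by positivity)
  push_cast
  rw [show (k:ℝ)+1+1 = k+2 by ring]
  linear_combination (-(-1)^k * √(2 * (↑k + 2)) * hcoef (k + 2) * Real.exp (x ^ 2 / 2) * (iteratedDeriv k (fun y ↦ Real.exp (-y ^ 2)) x)) * (-h1)

lemma hermite1_zero (x : ℝ) : hermite1 0 x = hcoef 0 * Real.exp (-x^2/2) := by
  rw [hermite1_eq]
  simp only [pow_zero, iteratedDeriv_zero, one_mul]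
  rw [mul_assoc, ← Real.exp_add]; congr 2; ring

lemma hermite1_one (x : ℝ) : Real.sqrt 2 * hermite1 1 x = 2 * x * hermite1 0 x := by
  have h := hermite1_deriv0 0 x
  have h2 : HasDerivAt (hermite1 0) (-x * hermite1 0 x) x := by
    have e : hermite1 0 = fun x => hcoef 0 * Real.exp (-x^2/2) := funext hermite1_zero
    rw [e]
    have h := ((((hasDerivAt_id x).pow 2).neg.div_const 2).exp).const_mul (hcoef 0)
    refine h.congr_deriv ?_
    simp
    ring
  have := h.unique h2
  simp at this
  linarith

lemma sqrt_half_mul (y : ℝ) (hy : 0 ≤ y) : Real.sqrt (y/2) = Real.sqrt (2*y) / 2 := by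
  rw [show y/2 = (2*y)/2^2 by ring, Real.sqrt_div (by positivity), Real.sqrt_sq (by norm_num)]

/-- position operator -/
lemma hermite1_x (k : ℕ) (x : ℝ) : x * hermite1 k x =
    Real.sqrt ((k+1)/2) * hermite1 (k+1) x + Real.sqrt (k/2) * hermite1 (k-1) x := by
  rw [sqrt_half_mul _ (by positivity), sqrt_half_mul _ (by positivity)]
  cases k with
  | zero => have := hermite1_one x; simp; linarith
  | succ k =>
    have := hermite1_rec0 k x
    push_cast
    rw [show (k:ℝ)+1+1 = k+2 by ring, show k+1+1 = k+2 by ring]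
    linarith

/-- derivative operator -/
lemma hermite1_deriv (k : ℕ) (x : ℝ) : HasDerivAt (hermite1 k)
    (Real.sqrt (k/2) * hermite1 (k-1) x - Real.sqrt ((k+1)/2) * hermite1 (k+1) x) x := by
  refine (hermite1_deriv0 k x).congr_deriv ?_
  rw [hermite1_x, sqrt_half_mul (k+1) (by positivity)]; ring

lemma hermite1_poly (k : ℕ) : ∃ p : Polynomial ℝ, ∀ x, hermite1 k x = p.eval x * Real.exp (-x^2/2) := by
  induction k using Nat.strong_induction_on with
  | _ k ih =>
    match k with
    | 0 => exact ⟨Polynomial.C (hcoef 0), fun x => by simp [hermite1_zero]⟩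
    | 1 =>
      obtain ⟨p, hp⟩ := ih 0 (by norm_num)
      refine ⟨Polynomial.C (2/Real.sqrt 2) * Polynomial.X * p, fun x => ?_⟩
      have h := hermite1_one x
      have h2 : Real.sqrt 2 ≠ 0 := by positivity
      rw [hp] at h
      apply mul_left_cancel₀ h2
      rw [h]
      simp only [Polynomial.eval_mul, Polynomial.eval_C, Polynomial.eval_X]
      generalize Real.sqrt 2 = y at *
      field_simp
    | k+2 =>
      obtain ⟨p, hp⟩ := ih k (by omega)
      obtain ⟨q, hq⟩ := ih (k+1) (by omega)
      have h2 : Real.sqrt (2 * (k+2)) ≠ 0 := by positivity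
      refine ⟨Polynomial.C (1/Real.sqrt (2 * (k+2))) *
        (Polynomial.C 2 * Polynomial.X * q - Polynomial.C (Real.sqrt (2 * (k+1))) * p), fun x => ?_⟩
      have h := hermite1_rec0 k x
      rw [hp, hq] at h
      apply mul_left_cancel₀ h2
      rw [h]
      simp only [Polynomial.eval_mul, Polynomial.eval_sub, Polynomial.eval_C, Polynomial.eval_X]
      generalize Real.sqrt (2 * ((k:ℝ)+2)) = y at *
      field_simp

lemma integrable_poly_gauss (p : Polynomial ℝ) : Integrable (fun x : ℝ => p.eval x * Real.exp (-x^2)) := by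
  induction p using Polynomial.induction_on' with
  | add p q hp hq =>
    simp only [Polynomial.eval_add, add_mul]; exact hp.add hq
  | monomial n a =>
    have h := (integrable_rpow_mul_exp_neg_mul_sq (b := 1) one_pos (s := n)
      (by have : (0:ℝ) ≤ n := by positivity
          linarith)).const_mul a
    refine h.congr (Filter.Eventually.of_forall fun x => ?_)
    simp [Real.rpow_natCast]; ring

lemma hermite1_int (p j k : ℕ) : Integrable (fun x : ℝ => x^p * (hermite1 j x * hermite1 k x)) := by
  obtain ⟨P, hP⟩ := hermite1_poly j
  obtain ⟨Q, hQ⟩ := hermite1_poly k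
  refine (integrable_poly_gauss (Polynomial.X^p * (P * Q))).congr (Filter.Eventually.of_forall fun x => ?_)
  simp only [hP, hQ, Polynomial.eval_mul, Polynomial.eval_pow, Polynomial.eval_X]
  rw [show -x^2 = -x^2/2 + -x^2/2 by ring, Real.exp_add]; ring

lemma hermite1_int0 (j k : ℕ) : Integrable (fun x : ℝ => hermite1 j x * hermite1 k x) := by
  simpa using hermite1_int 0 j k

/-- Orthonormality -/
lemma hermite1_orth (j k : ℕ) : ∫ x, hermite1 j x * hermite1 k x = if j = k then 1 else 0 := by
  -- adjointness relation
  have key : ∀ j k : ℕ, Real.sqrt (2*(k+1)) * ∫ x, hermite1 j x * hermite1 (k+1) x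
      = Real.sqrt (2*j) * ∫ x, hermite1 (j-1) x * hermite1 k x := by
    intro j k
    have hd : ∀ x, HasDerivAt (fun x => hermite1 j x * hermite1 k x)
        (Real.sqrt (2*j) * (hermite1 (j-1) x * hermite1 k x)
          - Real.sqrt (2*(k+1)) * (hermite1 j x * hermite1 (k+1) x)) x := by
      intro x
      have h := (hermite1_deriv j x).mul (hermite1_deriv k x)
      refine h.congr_deriv ?_
      have hj := hermite1_x j x
      have hk := hermite1_x k x
      rw [sqrt_half_mul (j+1) (by positivity), sqrt_half_mul j (by positivity)] at *
      rw [sqrt_half_mul (k+1) (by positivity), sqrt_half_mul k (by positivity)] at *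
      linear_combination (hermite1 k x) * (hj) - hermite1 j x * hk
    have i1 := (hermite1_int0 (j-1) k).const_mul (Real.sqrt (2*j))
    have i2 := (hermite1_int0 j (k+1)).const_mul (Real.sqrt (2*(k+1)))
    have h := integral_eq_zero_of_hasDerivAt_of_integrable hd (i1.sub i2) (hermite1_int0 j k)
    rw [integral_sub i1 i2, integral_const_mul, integral_const_mul] at h
    linarith
  have h0 : ∀ k : ℕ, ∫ x, hermite1 0 x * hermite1 k x = if 0 = k then 1 else 0 := by
    intro k
    cases k with
    | zero =>
      simp only [hermite1_zero, if_true]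
      have e : ∀ x : ℝ, hcoef 0 * Real.exp (-x^2/2) * (hcoef 0 * Real.exp (-x^2/2))
         = hcoef 0 ^ 2 * Real.exp (-1 * x^2) := by
        intro x
        rw [show -1 * x^2 = -x^2/2 + -x^2/2 by ring, Real.exp_add]; ring
      simp only [e]
      rw [integral_const_mul, integral_gaussian]
      unfold hcoef
      have hpi : 0 < Real.sqrt Real.pi := Real.sqrt_pos.2 Real.pi_pos
      rw [← Real.rpow_natCast, ← Real.rpow_mul (by positivity)]
      norm_num
      rw [Real.rpow_neg_one]
      field_simp
    | succ k =>
      have := key 0 k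
      have h2 : Real.sqrt (2 * ((k:ℝ)+1)) ≠ 0 := by positivity
      simp only [Nat.cast_zero, mul_zero, Real.sqrt_zero, zero_mul] at this
      simpa using (mul_eq_zero.1 this).resolve_left h2
  induction j generalizing k with
  | zero => exact h0 k
  | succ j ih =>
    cases k with
    | zero =>
      have := h0 (j+1)
      simp only [mul_comm (hermite1 (j+1) _)]
      rw [this]; simp
    | succ k =>
      have h := key (j+1) k
      rw [Nat.add_sub_cancel, ih k] at h
      have h2 : Real.sqrt (2 * ((k:ℝ)+1)) ≠ 0 := by positivity
      by_cases hjk : j = k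
      · subst hjk
        push_cast at h
        simp only [if_true] at h ⊢
        exact mul_left_cancel₀ h2 h
      · simp [hjk] at h ⊢
        rcases h with h | h
        · exact absurd h (by positivity)
        · exact h

lemma sq_add_le_two (a b : ℝ) : (a + b)^2 ≤ 2 * a^2 + 2 * b^2 := by nlinarith [sq_nonneg (a-b)]

/-- moments -/
lemma hermite1_moment (p : ℕ) : ∀ k : ℕ, ∫ x, (x^p)^2 * (hermite1 k x * hermite1 k x) ≤ (2 * ((k:ℝ)+p))^p := by
  induction p with
  | zero => intro k; simp [hermite1_orth]
  | succ p ih =>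
    intro k
    have hI : ∀ q j : ℕ, Integrable (fun x : ℝ => (x^q)^2 * (hermite1 j x * hermite1 j x)) := by
      intro q j
      have := hermite1_int (q*2) j j
      simpa [pow_mul] using this
    have h1 : ∫ x, (x^(p+1))^2 * (hermite1 k x * hermite1 k x) ≤
        ∫ x, (((k:ℝ)+1) * ((x^p)^2 * (hermite1 (k+1) x * hermite1 (k+1) x))
          + k * ((x^p)^2 * (hermite1 (k-1) x * hermite1 (k-1) x))) := by
      apply integral_mono (hI _ _) (((hI _ _).const_mul _).add ((hI _ _).const_mul _))
      intro x
      simp only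
      have e : (x^(p+1))^2 * (hermite1 k x * hermite1 k x) = (x^p)^2 * (x * hermite1 k x)^2 := by ring
      rw [e, hermite1_x]
      have s1 : Real.sqrt (((k:ℝ)+1)/2)^2 = ((k:ℝ)+1)/2 := Real.sq_sqrt (by positivity)
      have s2 : Real.sqrt ((k:ℝ)/2)^2 = (k:ℝ)/2 := Real.sq_sqrt (by positivity)
      have := mul_le_mul_of_nonneg_left (sq_add_le_two (√((↑k + 1) / 2) * hermite1 (k + 1) x)
        (√(↑k / 2) * hermite1 (k - 1) x)) (sq_nonneg (x^p))
      rw [mul_pow, mul_pow, s1, s2] at this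
      refine this.trans (le_of_eq ?_)
      simp only [Pi.add_apply]
      ring
    refine h1.trans ?_
    rw [integral_add ((hI _ _).const_mul _) ((hI _ _).const_mul _), integral_const_mul, integral_const_mul]
    have a1 := ih (k+1)
    have a2 := ih (k-1)
    have a3 : (2 * (((k-1:ℕ):ℝ)+p))^p ≤ (2 * (((k+1:ℕ):ℝ)+p))^p := by
      gcongr
      omega
    push_cast at a1 a3 ⊢
    calc _ ≤ ((k:ℝ)+1) * (2 * ((k:ℝ)+1+p))^p + k * (2 * ((k:ℝ)+1+p))^p := by
          gcongr
          exact a2.trans a3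
      _ ≤ (2 * ((k:ℝ)+(p+1))) * (2 * ((k:ℝ)+(p+1)))^p := by
          rw [← add_mul, show (k:ℝ)+1+p = k+(p+1) by ring]
          gcongr
          have : (0:ℝ) ≤ p := by positivity
          linarith
      _ = _ := by rw [pow_succ]; ring

lemma hermite1_cont (k : ℕ) : Continuous (hermite1 k) :=
  continuous_iff_continuousAt.2 fun x => (hermite1_deriv k x).continuousAt

/-- sup bound -/
lemma hermite1_sup (k : ℕ) (x : ℝ) : |hermite1 k x| ≤ 2 * ((k:ℝ)+1) := by
  set d : ℝ → ℝ := fun x => Real.sqrt (k/2) * hermite1 (k-1) x - Real.sqrt ((k+1)/2) * hermite1 (k+1) x with hd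
  have hder : ∀ x, HasDerivAt (fun x => hermite1 k x * hermite1 k x) (2 * (hermite1 k x * d x)) x := by
    intro x
    refine ((hermite1_deriv k x).mul (hermite1_deriv k x)).congr_deriv ?_
    simp only [hd]; ring
  have hintg : Integrable (fun x => 2 * (hermite1 k x * d x)) := by
    have := (((hermite1_int0 k (k-1)).const_mul (Real.sqrt (k/2))).sub
      ((hermite1_int0 k (k+1)).const_mul (Real.sqrt ((k+1)/2)))).const_mul 2
    refine this.congr (Filter.Eventually.of_forall fun x => ?_)
    simp [hd]; ring
  have hlim := tendsto_zero_of_hasDerivAt_of_integrableOn_Iic (a := x) (fun y _ => hder y)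
    hintg.integrableOn (hermite1_int0 k k).integrableOn
  have hF := integral_Iic_of_hasDerivAt_of_tendsto (a := x) (hder x).continuousAt.continuousWithinAt
    (fun y _ => hder y) hintg.integrableOn hlim
  rw [sub_zero] at hF
  have hb : hermite1 k x * hermite1 k x ≤ 2 * k + 2 := by
    rw [← hF]
    have I1 := hermite1_int0 k k
    have I2 := (hermite1_int0 (k-1) (k-1)).const_mul (k:ℝ)
    have I3 := (hermite1_int0 (k+1) (k+1)).const_mul ((k:ℝ)+1)
    calc _ ≤ ∫ y in Set.Iic x, |2 * (hermite1 k y * d y)| :=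
          integral_mono hintg.integrableOn hintg.abs.integrableOn (fun y => le_abs_self _)
      _ ≤ ∫ y, |2 * (hermite1 k y * d y)| :=
          setIntegral_le_integral hintg.abs (Filter.Eventually.of_forall fun y => abs_nonneg _)
      _ ≤ ∫ y, (hermite1 k y * hermite1 k y + ((k:ℝ) * (hermite1 (k-1) y * hermite1 (k-1) y) +
            ((k:ℝ)+1) * (hermite1 (k+1) y * hermite1 (k+1) y))) := by
          refine integral_mono hintg.abs (I1.add (I2.add I3)) (fun y => ?_)
          have s1 : Real.sqrt (((k:ℝ)+1)/2)^2 = ((k:ℝ)+1)/2 := Real.sq_sqrt (by positivity)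
          have s2 : Real.sqrt ((k:ℝ)/2)^2 = (k:ℝ)/2 := Real.sq_sqrt (by positivity)
          have h1 := sq_add_le_two (√(↑k / 2) * hermite1 (k - 1) y) (-(√((↑k + 1) / 2) * hermite1 (k + 1) y))
          have h2 : d y = √(↑k / 2) * hermite1 (k - 1) y + (-(√((↑k + 1) / 2) * hermite1 (k + 1) y)) := by
            simp only [hd]; ring
          rw [← h2, neg_sq, mul_pow, mul_pow, s1, s2] at h1
          simp only
          rw [abs_le]
          constructor <;> nlinarith [sq_nonneg (hermite1 k y - d y), sq_nonneg (hermite1 k y + d y)]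
      _ = 2 * k + 2 := by
          have I23 : Integrable (fun y => (k:ℝ) * (hermite1 (k-1) y * hermite1 (k-1) y) +
            ((k:ℝ)+1) * (hermite1 (k+1) y * hermite1 (k+1) y)) := I2.add I3
          rw [integral_add I1 I23, integral_add I2 I3, integral_const_mul, integral_const_mul]
          simp [hermite1_orth]; ring
  rw [abs_le]
  have : (0:ℝ) ≤ k := by positivity
  constructor <;> nlinarith

lemma hermite1_contDiff (n k : ℕ) : ContDiff ℝ n (hermite1 k) := by
  induction n generalizing k with
  | zero => exact contDiff_zero.2 (hermite1_cont k)
  | succ n ih =>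
    have hd : deriv (hermite1 k) = fun x => Real.sqrt (k/2) * hermite1 (k-1) x - Real.sqrt ((k+1)/2) * hermite1 (k+1) x :=
      funext fun x => (hermite1_deriv k x).deriv
    push_cast
    rw [contDiff_succ_iff_deriv]
    refine ⟨fun x => (hermite1_deriv k x).differentiableAt, by simp, ?_⟩
    rw [hd]
    exact (contDiff_const.mul (ih _)).sub (contDiff_const.mul (ih _))

lemma hermite1_iter_bound (j : ℕ) : ∀ (k : ℕ) (x : ℝ), |iteratedDeriv j (hermite1 k) x| ≤
    Real.sqrt (2 * ((k:ℝ)+j))^j * (2 * ((k:ℝ) + j + 1)) := by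
  induction j with
  | zero => intro k x; simpa using hermite1_sup k x
  | succ j ih =>
    intro k x
    have hd : deriv (hermite1 k) = fun x => Real.sqrt (k/2) * hermite1 (k-1) x - Real.sqrt ((k+1)/2) * hermite1 (k+1) x :=
      funext fun x => (hermite1_deriv k x).deriv
    rw [iteratedDeriv_succ', hd]
    have c1 : ContDiffAt ℝ j (fun x => Real.sqrt (k/2) * hermite1 (k-1) x) x :=
      (contDiff_const.mul (hermite1_contDiff j _)).contDiffAt
    have c2 : ContDiffAt ℝ j (fun x => Real.sqrt ((k+1)/2) * hermite1 (k+1) x) x :=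
      (contDiff_const.mul (hermite1_contDiff j _)).contDiffAt
    rw [iteratedDeriv_fun_sub c1 c2, iteratedDeriv_const_mul_field, iteratedDeriv_const_mul_field]
    set S := Real.sqrt (2 * ((k:ℝ)+(j+1:ℕ))) with hS
    have b1 : |iteratedDeriv j (hermite1 (k+1)) x| ≤ S^j * (2 * ((k:ℝ) + (j+1:ℕ) + 1)) := by
      refine (ih (k+1) x).trans (le_of_eq ?_)
      rw [hS]; push_cast; ring_nf
    have b2 : |iteratedDeriv j (hermite1 (k-1)) x| ≤ S^j * (2 * ((k:ℝ) + (j+1:ℕ) + 1)) := by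
      refine (ih (k-1) x).trans ?_
      have h1 : ((k-1:ℕ):ℝ) ≤ k := by exact_mod_cast Nat.sub_le k 1
      rw [hS]; push_cast
      gcongr <;> linarith
    have d1 : Real.sqrt ((k:ℝ)/2) ≤ S/2 := by
      rw [sqrt_half_mul _ (by positivity), hS]
      gcongr
      have : (0:ℝ) ≤ ((j+1:ℕ):ℝ) := by positivity
      linarith
    have d2 : Real.sqrt (((k:ℝ)+1)/2) ≤ S/2 := by
      rw [sqrt_half_mul _ (by positivity), hS]
      gcongr
      push_cast
      have : (0:ℝ) ≤ j := by positivity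
      linarith
    refine (abs_sub _ _).trans ?_
    rw [abs_mul, abs_mul, abs_of_nonneg (Real.sqrt_nonneg _), abs_of_nonneg (Real.sqrt_nonneg _)]
    have hS0 : 0 ≤ S := Real.sqrt_nonneg _
    calc _ ≤ S/2 * (S^j * (2 * ((k:ℝ) + (j+1:ℕ) + 1))) + S/2 * (S^j * (2 * ((k:ℝ) + (j+1:ℕ) + 1))) := by
          gcongr
      _ = _ := by rw [pow_succ]; ring

/-- polynomial approximation; degree ≤ D, D ≥ 1. -/
lemma hermite1_taylor (k D : ℕ) (hD : 1 ≤ D) (a s : ℝ) (hs : 0 < s) : ∃ q : Polynomial ℝ, q.natDegree ≤ D ∧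
    ∀ t ∈ Set.Icc a (a+s), |hermite1 k t - q.eval t| ≤
      Real.sqrt (2 * ((k:ℝ)+D))^D * (2 * ((k:ℝ) + D + 1)) * s^D / (D-1).factorial := by
  obtain ⟨d, rfl⟩ : ∃ d, D = d+1 := ⟨D-1, by omega⟩
  rw [Nat.add_sub_cancel]
  refine ⟨∑ i ∈ Finset.range (d+1), Polynomial.C ((i.factorial : ℝ)⁻¹ *
    iteratedDerivWithin i (hermite1 k) (Set.Icc a (a+s)) a) * (Polynomial.X - Polynomial.C a)^i, ?_, ?_⟩
  · apply Polynomial.natDegree_sum_le_of_forall_le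
    intro i hi
    refine (Polynomial.natDegree_C_mul_le _ _).trans ?_
    rw [Polynomial.natDegree_pow, Polynomial.natDegree_X_sub_C]
    have := Finset.mem_range.1 hi
    omega
  · intro t ht
    have hu : UniqueDiffOn ℝ (Set.Icc a (a+s)) := uniqueDiffOn_Icc (by linarith)
    have h := taylor_mean_remainder_bound (f := hermite1 k) (n := d) (a := a) (b := a+s) (x := t)
      (C := Real.sqrt (2 * ((k:ℝ)+(d+1:ℕ)))^(d+1) * (2 * ((k:ℝ) + (d+1:ℕ) + 1)))
      (by linarith) (by exact_mod_cast (hermite1_contDiff (d+1) k).contDiffOn) ht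
      (by
        intro y hy
        rw [iteratedDerivWithin_eq_iteratedDeriv hu (by exact_mod_cast (hermite1_contDiff (d+1) k).contDiffAt) hy]
        exact hermite1_iter_bound (d+1) k y)
    rw [taylor_within_apply] at h
    have e : (∑ i ∈ Finset.range (d+1), Polynomial.C ((i.factorial : ℝ)⁻¹ *
      iteratedDerivWithin i (hermite1 k) (Set.Icc a (a+s)) a) * (Polynomial.X - Polynomial.C a)^i).eval t
      = ∑ i ∈ Finset.range (d+1), ((i.factorial:ℝ)⁻¹ * (t-a)^i) •
          iteratedDerivWithin i (hermite1 k) (Set.Icc a (a+s)) a := by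
      rw [Polynomial.eval_finsetSum]
      apply Finset.sum_congr rfl
      intro i _
      simp; ring
    rw [e, ← Real.norm_eq_abs]
    refine h.trans ?_
    have h1 : 0 ≤ t - a := by linarith [ht.1]
    have h2 : t - a ≤ s := by linarith [ht.2]
    gcongr

lemma exists_sep_points (h : ℝ) (hh : 0 < h) (k : ℕ) : ∀ (E : Set ℝ), BddBelow E →
    ENNReal.ofReal (2 * h * k) < volume E →
    ∃ x : ℕ → ℝ, (∀ i ≤ k, x i ∈ E) ∧ ∀ i < k, x i + h ≤ x (i+1) := by
  induction k with
  | zero =>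
    intro E _ hE
    have : E.Nonempty := by
      by_contra hne
      rw [Set.not_nonempty_iff_eq_empty] at hne
      simp [hne] at hE
    obtain ⟨y, hy⟩ := this
    exact ⟨fun _ => y, fun _ _ => hy, by simp⟩
  | succ k ih =>
    intro E hb hE
    have hne : E.Nonempty := by
      by_contra hne
      rw [Set.not_nonempty_iff_eq_empty] at hne
      simp [hne] at hE
    obtain ⟨x0, hx0, hlt⟩ := exists_lt_of_csInf_lt hne (show sInf E < sInf E + h by linarith)
    set E1 := E ∩ Set.Ici (x0 + h) with hE1
    have hsub : E ⊆ Set.Icc (sInf E) (sInf E + 2*h) ∪ E1 := by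
      intro y hy
      by_cases hy2 : x0 + h ≤ y
      · exact Or.inr ⟨hy, hy2⟩
      · left
        exact ⟨csInf_le hb hy, by push Not at hy2; linarith⟩
    have hv : volume E ≤ ENNReal.ofReal (2*h) + volume E1 := by
      refine (measure_mono hsub).trans ((measure_union_le _ _).trans ?_)
      rw [Real.volume_Icc]
      gcongr
      linarith
    have hlt2 : ENNReal.ofReal (2*h*k) < volume E1 := by
      by_contra hcon
      push Not at hcon
      have : volume E ≤ ENNReal.ofReal (2*h*(k+1:ℕ)) := by
        refine hv.trans ?_
        calc _ ≤ ENNReal.ofReal (2*h) + ENNReal.ofReal (2*h*k) := by gcongr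
          _ = _ := by
            rw [← ENNReal.ofReal_add (by positivity) (by positivity)]
            congr 1; push_cast; ring
      exact absurd hE (not_lt.2 this)
    obtain ⟨x, hx, hx2⟩ := ih E1 (hb.mono Set.inter_subset_left) hlt2
    refine ⟨fun i => Nat.casesOn i x0 x, ?_, ?_⟩
    · intro i hi
      cases i with
      | zero => exact hx0
      | succ i => exact (hx i (by omega)).1
    · intro i hi
      cases i with
      | zero => exact (hx 0 (by omega)).2
      | succ i => exact hx2 i (by omega)

lemma sep_points_dist (h : ℝ) (k : ℕ) (x : ℕ → ℝ) (hx : ∀ i < k, x i + h ≤ x (i+1)) (i d : ℕ) (hd : i + d ≤ k) :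
    x i + h * d ≤ x (i+d) := by
  induction d with
  | zero => simp
  | succ d ih =>
    have := ih (by omega)
    have := hx (i+d) (by omega)
    rw [← add_assoc]; push_cast; linarith

lemma prod_dist_factorial (D i : ℕ) (hi : i ≤ D) :
    ∏ j ∈ (Finset.range (D+1)).erase i, |(i:ℝ) - j| = (i.factorial : ℝ) * (D-i).factorial := by
  have e : (Finset.range (D+1)).erase i = Finset.range i ∪ Finset.Ico (i+1) (D+1) := by
    ext j; simp; omega
  have hdis : Disjoint (Finset.range i) (Finset.Ico (i+1) (D+1)) := by
    rw [Finset.disjoint_left]; intro j; simp; omega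
  rw [e, Finset.prod_union hdis]
  congr 1
  · rw [← Finset.prod_range_reflect, ← Finset.prod_range_add_one_eq_factorial]
    push_cast
    apply Finset.prod_congr rfl
    intro j hj
    have hj := Finset.mem_range.1 hj
    rw [show i - 1 - j = i - (j+1) by omega, Nat.cast_sub (by omega)]
    push_cast
    rw [abs_of_nonneg (by linarith)]; ring
  · rw [Finset.prod_Ico_eq_prod_range, ← Finset.prod_range_add_one_eq_factorial]
    push_cast
    apply Finset.prod_congr rfl
    intro j hj
    rw [abs_sub_comm, abs_of_nonneg] <;> linarith [(Nat.cast_nonneg j : (0:ℝ) ≤ j)]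

lemma remez_one (θ : ℝ) (hθ : 0 < θ) (D : ℕ) (a s : ℝ) (hs : 0 < s) (p : Polynomial ℂ) (hp : p.natDegree ≤ D)
    (E : Set ℝ) (hE : E ⊆ Set.Icc a (a+s)) (hvol : ENNReal.ofReal (θ * s) ≤ volume E) (b : ℝ)
    (hb : ∀ t ∈ E, ‖p.eval (t:ℂ)‖ ≤ b) : ∀ t ∈ Set.Icc a (a+s), ‖p.eval (t:ℂ)‖ ≤ (8 * Real.exp 1 / θ)^D * b := by
  intro t ht
  have hpos : 0 < volume E := lt_of_lt_of_le (by simp; positivity) hvol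
  have hne : E.Nonempty := by
    by_contra hne
    rw [Set.not_nonempty_iff_eq_empty] at hne
    simp [hne] at hpos
  obtain ⟨y, hy⟩ := hne
  have hb0 : 0 ≤ b := (norm_nonneg _).trans (hb y hy)
  rcases Nat.eq_zero_or_pos D with rfl | hD
  · have := Polynomial.eq_C_of_natDegree_le_zero hp
    rw [this] at hb ⊢
    simpa using hb y hy
  have hDr : (0:ℝ) < D := by exact_mod_cast hD
  set h := θ * s / (4 * D) with hh
  have hhpos : 0 < h := by positivity
  obtain ⟨x, hxE, hxs⟩ := exists_sep_points h hhpos D E ⟨a, fun z hz => (hE hz).1⟩ (by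
    refine lt_of_lt_of_le ?_ hvol
    rw [ENNReal.ofReal_lt_ofReal_iff (by positivity), hh]
    field_simp
    norm_num)
  have hdist : ∀ i ≤ D, ∀ j ≤ D, h * |(i:ℝ) - j| ≤ |x i - x j| := by
    have main : ∀ i ≤ D, ∀ j ≤ D, i ≤ j → h * |(i:ℝ) - j| ≤ |x i - x j| := by
      intro i hi j hj hij
      obtain ⟨d, rfl⟩ := Nat.exists_eq_add_of_le hij
      have := sep_points_dist h D x hxs i d hj
      have h0 : 0 ≤ h * d := by positivity
      rw [abs_sub_comm, abs_sub_comm (x i), abs_of_nonneg (by push_cast; linarith [(Nat.cast_nonneg d : (0:ℝ) ≤ d)]), abs_of_nonneg (by linarith)]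
      push_cast; linarith
    intro i hi j hj
    rcases le_total i j with hij | hij
    · exact main i hi j hj hij
    · rw [abs_sub_comm, abs_sub_comm (x i)]; exact main j hj i hi hij
  have hinj : Set.InjOn (fun i => (x i : ℂ)) (Finset.range (D+1)) := by
    intro i hi j hj hij
    have hi := Finset.mem_range.1 (Finset.mem_coe.1 hi)
    have hj := Finset.mem_range.1 (Finset.mem_coe.1 hj)
    have hij : x i = x j := Complex.ofReal_injective hij
    have := hdist i (by omega) j (by omega)
    rw [hij, sub_self, abs_zero] at this
    have h2 : |(i:ℝ) - j| ≤ 0 := by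
      by_contra hc
      push Not at hc
      have := mul_pos hhpos hc
      linarith
    have := abs_eq_zero.1 (le_antisymm h2 (abs_nonneg _))
    exact_mod_cast sub_eq_zero.1 this
  have hdeg : p.degree < (Finset.range (D+1)).card := by
    rw [Finset.card_range]
    refine lt_of_le_of_lt Polynomial.degree_le_natDegree ?_
    exact_mod_cast Nat.lt_succ_of_le hp
  rw [Lagrange.eq_interpolate hinj hdeg, Lagrange.interpolate_apply, Polynomial.eval_finsetSum]
  have term : ∀ i ∈ Finset.range (D+1), ‖Polynomial.eval (t:ℂ) (Polynomial.C (p.eval (x i : ℂ)) *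
      Lagrange.basis (Finset.range (D+1)) (fun i => (x i : ℂ)) i)‖ ≤ b * ((s/h)^D / D.factorial * D.choose i) := by
    intro i hi
    have hi := Finset.mem_range.1 hi
    rw [Polynomial.eval_mul, Polynomial.eval_C, norm_mul, Lagrange.basis, Polynomial.eval_prod, norm_prod]
    have hprod : ∏ j ∈ (Finset.range (D+1)).erase i,
        ‖Polynomial.eval (t:ℂ) (Lagrange.basisDivisor (x i : ℂ) (x j : ℂ))‖ ≤
        ∏ j ∈ (Finset.range (D+1)).erase i, ((s/h) / |(i:ℝ) - j|) := by
      apply Finset.prod_le_prod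
      · intros; positivity
      · intro j hj
        obtain ⟨hji, hj⟩ := Finset.mem_erase.1 hj
        have hj := Finset.mem_range.1 hj
        have hij : 0 < |(i:ℝ) - j| := by
          rw [abs_pos, sub_ne_zero]; exact_mod_cast hji.symm
        have h1 := hdist i (by omega) j (by omega)
        have h2 : |t - x j| ≤ s := by
          have h3 := hE (hxE j (by omega))
          rw [abs_le]; constructor <;> linarith [h3.1, h3.2, ht.1, ht.2]
        rw [Lagrange.basisDivisor]
        simp only [Polynomial.eval_mul, Polynomial.eval_C, Polynomial.eval_sub, Polynomial.eval_X]
        rw [← Complex.ofReal_sub, ← Complex.ofReal_sub, norm_mul, norm_inv, Complex.norm_real, Complex.norm_real,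
          Real.norm_eq_abs, Real.norm_eq_abs, div_div]
        rw [inv_mul_eq_div]
        gcongr
    rw [Finset.prod_div_distrib, prod_dist_factorial D i (by omega), Finset.prod_const,
      Finset.card_erase_of_mem (Finset.mem_range.2 hi), Finset.card_range, Nat.add_sub_cancel] at hprod
    have hch : (s/h)^D / ((i.factorial : ℝ) * (D-i).factorial) = (s/h)^D / D.factorial * D.choose i := by
      rw [Nat.cast_choose ℝ (show i ≤ D by omega)]
      have : (D.factorial:ℝ) ≠ 0 := by positivity
      field_simp
    rw [hch] at hprod
    exact mul_le_mul (hb _ (hxE i (by omega))) hprod (Finset.prod_nonneg fun _ _ => norm_nonneg _) hb0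
  refine (norm_sum_le _ _).trans ((Finset.sum_le_sum term).trans ?_)
  rw [← Finset.mul_sum, ← Finset.mul_sum]
  have hc : ∑ i ∈ Finset.range (D+1), (D.choose i : ℝ) = 2^D := by exact_mod_cast Nat.sum_range_choose D
  rw [hc, mul_comm]
  apply mul_le_mul_of_nonneg_right _ hb0
  have he := Real.pow_div_factorial_le_exp (D:ℝ) hDr.le D
  have hsh : s / h = 4 / θ * D := by rw [hh]; field_simp
  rw [hsh]
  calc (4/θ * D)^D / D.factorial * 2^D = (8/θ)^D * ((D:ℝ)^D / D.factorial) := by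
        rw [show (8:ℝ)/θ = 4/θ * 2 by ring, mul_pow, mul_pow]; ring
    _ ≤ (8/θ)^D * Real.exp D := by gcongr
    _ = _ := by
        rw [show Real.exp D = Real.exp 1 ^ D by rw [← Real.exp_nat_mul]; simp, ← mul_pow]; ring

def SepPoly (D n : ℕ) (F : (Fin n → ℝ) → ℂ) : Prop :=
  ∀ (x : Fin n → ℝ) (j : Fin n), ∃ p : Polynomial ℂ, p.natDegree ≤ D ∧
    ∀ t : ℝ, F (Function.update x j t) = p.eval (t:ℂ)

def ccube (n : ℕ) (a : Fin n → ℝ) (s : ℝ) : Set (Fin n → ℝ) :=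
  Set.pi Set.univ (fun i => Set.Icc (a i) (a i + s))

lemma ccube_vol (n : ℕ) (a : Fin n → ℝ) (s : ℝ) : volume (ccube n a s) = ENNReal.ofReal s ^ n := by
  rw [ccube, volume_pi_pi]; simp [Real.volume_Icc]

lemma ccube_meas (n : ℕ) (a : Fin n → ℝ) (s : ℝ) : MeasurableSet (ccube n a s) :=
  MeasurableSet.univ_pi fun _ => measurableSet_Icc

lemma remez_multi (n : ℕ) : ∀ θ : ℝ, 0 < θ → ∃ Λ : ℝ, 1 ≤ Λ ∧ ∀ (D : ℕ) (a : Fin n → ℝ) (s : ℝ), 0 < s →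
    ∀ F : (Fin n → ℝ) → ℂ, SepPoly D n F → ∀ E : Set (Fin n → ℝ), MeasurableSet E → E ⊆ ccube n a s →
    ENNReal.ofReal (θ * s^n) ≤ volume E → ∀ b : ℝ, (∀ x ∈ E, ‖F x‖ ≤ b) →
    ∀ x ∈ ccube n a s, ‖F x‖ ≤ Λ^D * b := by
  induction n with
  | zero =>
    intro θ hθ
    refine ⟨1, le_rfl, ?_⟩
    intro D a s hs F _ E _ _ hvol b hb x _
    have hpos : 0 < volume E := lt_of_lt_of_le (by simp; positivity) hvol
    have hne : E.Nonempty := by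
      by_contra hne
      rw [Set.not_nonempty_iff_eq_empty] at hne
      simp [hne] at hpos
    obtain ⟨y, hy⟩ := hne
    rw [Subsingleton.elim x y]
    simpa using hb y hy
  | succ n ih =>
    intro θ hθ
    obtain ⟨Λ', hΛ', H⟩ := ih (θ/2) (by positivity)
    set c := max 1 (8 * Real.exp 1 / (θ/2)) with hc
    have hc1 : 1 ≤ c := le_max_left _ _
    refine ⟨Λ' * c, one_le_mul_of_one_le_of_one_le hΛ' hc1, ?_⟩
    intro D a s hs F hF E hEm hEsub hvol b hb
    set e := MeasurableEquiv.piFinSuccAbove (fun _ : Fin (n+1) => ℝ) 0 with he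
    have hes : ∀ t y, e.symm (t, y) = Fin.cons t y := by
      intro t y
      simp [he, MeasurableEquiv.piFinSuccAbove]
      rfl
    set a' : Fin n → ℝ := fun i => a i.succ with ha'
    have hmem : ∀ t y, (Fin.cons t y : Fin (n+1) → ℝ) ∈ ccube (n+1) a s ↔ t ∈ Set.Icc (a 0) (a 0 + s) ∧ y ∈ ccube n a' s := by
      intro t y
      simp only [ccube, Set.mem_univ_pi]
      rw [Fin.forall_fin_succ]
      simp [ha']
    set S : Set (ℝ × (Fin n → ℝ)) := e.symm ⁻¹' E with hS
    have hSm : MeasurableSet S := e.symm.measurable hEm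
    have hvS : volume S = volume E :=
      ((volume_preserving_piFinSuccAbove (fun _ : Fin (n+1) => ℝ) 0).symm).measure_preimage hEm.nullMeasurableSet
    set g : (Fin n → ℝ) → ℝ≥0∞ := fun y => volume ((fun t => (t, y)) ⁻¹' S) with hg
    have hgm : Measurable g := measurable_measure_prodMk_right hSm
    have hintg : volume E = ∫⁻ y, g y := by
      rw [← hvS, Measure.volume_eq_prod, Measure.prod_apply_symm hSm]
    set E' := ccube n a' s ∩ {y | ENNReal.ofReal (θ/2 * s) ≤ g y} with hE'
    have hE'm : MeasurableSet E' := (ccube_meas _ _ _).inter (measurableSet_le measurable_const hgm)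
    have hgsub : ∀ y, (fun t => (t, y)) ⁻¹' S ⊆ Set.Icc (a 0) (a 0 + s) := by
      intro y t ht
      have : e.symm (t, y) ∈ E := ht
      rw [hes] at this
      exact ((hmem _ _).1 (hEsub this)).1
    have hg_le : ∀ y, g y ≤ E'.indicator (fun _ => ENNReal.ofReal s) y +
        (ccube n a' s).indicator (fun _ => ENNReal.ofReal (θ/2*s)) y := by
      intro y
      by_cases hy : y ∈ ccube n a' s
      · by_cases hy2 : ENNReal.ofReal (θ/2 * s) ≤ g y
        · rw [Set.indicator_of_mem (show y ∈ E' from ⟨hy, hy2⟩)]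
          refine le_add_right ?_
          refine (measure_mono (hgsub y)).trans ?_
          rw [Real.volume_Icc]; simp
        · rw [Set.indicator_of_mem hy]
          push Not at hy2
          exact le_add_left hy2.le
      · have : (fun t => (t, y)) ⁻¹' S = ∅ := by
          rw [Set.eq_empty_iff_forall_notMem]
          intro t ht
          have : e.symm (t, y) ∈ E := ht
          rw [hes] at this
          exact hy ((hmem _ _).1 (hEsub this)).2
        simp [hg, this]
    have hE'vol : ENNReal.ofReal (θ/2 * s^n) ≤ volume E' := by
      by_contra hcon
      push Not at hcon
      have h1 : volume E ≤ ENNReal.ofReal s * volume E' + ENNReal.ofReal (θ/2*s) * ENNReal.ofReal s ^ n := by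
        rw [hintg]
        refine (lintegral_mono hg_le).trans ?_
        rw [lintegral_add_left (measurable_const.indicator hE'm), lintegral_indicator_const hE'm,
          lintegral_indicator_const (ccube_meas _ _ _), ccube_vol]
      have h2 : ENNReal.ofReal s * volume E' + ENNReal.ofReal (θ/2*s) * ENNReal.ofReal s ^ n <
          ENNReal.ofReal s * ENNReal.ofReal (θ/2 * s^n) + ENNReal.ofReal (θ/2*s) * ENNReal.ofReal s ^ n := by
        apply ENNReal.add_lt_add_right
        · exact ENNReal.mul_ne_top ENNReal.ofReal_ne_top (ENNReal.pow_ne_top ENNReal.ofReal_ne_top)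
        · exact ENNReal.mul_lt_mul_right (by simpa using hs) ENNReal.ofReal_ne_top hcon
      have h3 : ENNReal.ofReal s * ENNReal.ofReal (θ/2 * s^n) + ENNReal.ofReal (θ/2*s) * ENNReal.ofReal s ^ n
          = ENNReal.ofReal (θ * s^(n+1)) := by
        rw [← ENNReal.ofReal_pow hs.le, ← ENNReal.ofReal_mul hs.le, ← ENNReal.ofReal_mul (by positivity),
          ← ENNReal.ofReal_add (by positivity) (by positivity)]
        congr 1; ring
      exact absurd (hvol.trans h1) (not_le.2 (h2.trans_eq h3))
    intro x hx
    have hxe : x = Fin.cons (x 0) (fun i => x i.succ) := (Fin.cons_self_tail x).symm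
    rw [hxe] at hx ⊢
    generalize x 0 = t0 at hx ⊢
    generalize (fun i : Fin n => x i.succ) = y0 at hx ⊢
    obtain ⟨ht0, hy0⟩ := (hmem _ _).1 hx
    have hpos : 0 < volume E := lt_of_lt_of_le (by simp; positivity) hvol
    have hne : E.Nonempty := by
      by_contra hne
      rw [Set.not_nonempty_iff_eq_empty] at hne
      simp [hne] at hpos
    obtain ⟨w, hw⟩ := hne
    have hb0 : 0 ≤ b := (norm_nonneg _).trans (hb w hw)
    have := H D a' s hs (fun y => F (Fin.cons t0 y)) (by
        intro y j
        obtain ⟨p, hp, hp2⟩ := hF (Fin.cons t0 y) j.succ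
        refine ⟨p, hp, fun t => ?_⟩
        rw [← hp2 t]; simp only [Fin.cons_update])
      E' hE'm Set.inter_subset_left hE'vol (c^D * b) (by
        intro y hy
        obtain ⟨p, hp, hp2⟩ := hF (Fin.cons t0 y) 0
        have hp3 : ∀ t : ℝ, F (Fin.cons t y) = p.eval (t:ℂ) := by
          intro t; rw [← hp2 t, Fin.update_cons_zero]
        rw [hp3]
        refine (remez_one (θ/2) (by positivity) D (a 0) s hs p hp ((fun t => (t, y)) ⁻¹' S) (hgsub y) hy.2 b ?_ t0 ht0).trans ?_
        · intro t ht
          have : e.symm (t, y) ∈ E := ht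
          rw [hes] at this
          rw [← hp3]; exact hb _ this
        · gcongr
          exact le_max_right _ _)
      y0 hy0
    rw [mul_pow, mul_assoc]
    exact this

def ocube (n : ℕ) (a : Fin n → ℝ) (s : ℝ) : Set (Fin n → ℝ) :=
  Set.pi Set.univ (fun i => Set.Ico (a i) (a i + s))

lemma ocube_vol (n : ℕ) (a : Fin n → ℝ) (s : ℝ) : volume (ocube n a s) = ENNReal.ofReal s ^ n := by
  rw [ocube, volume_pi_pi]; simp [Real.volume_Ico]

lemma ocube_meas (n : ℕ) (a : Fin n → ℝ) (s : ℝ) : MeasurableSet (ocube n a s) :=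
  MeasurableSet.univ_pi fun _ => measurableSet_Ico

lemma ocube_sub (n : ℕ) (a : Fin n → ℝ) (s : ℝ) : ocube n a s ⊆ ccube n a s :=
  Set.pi_mono fun _ _ => Set.Ico_subset_Icc_self

lemma local_est (n : ℕ) (θ : ℝ) (hθ : 0 < θ) : ∃ Λ : ℝ, 1 ≤ Λ ∧ ∀ (D : ℕ) (a : Fin n → ℝ) (s : ℝ), 0 < s →
    ∀ F : (Fin n → ℝ) → ℂ, Continuous F → ∀ P : (Fin n → ℝ) → ℂ, SepPoly D n P → ∀ η : ℝ, 0 < η →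
    (∀ x ∈ ccube n a s, ‖F x - P x‖ ≤ η) → ∀ ω : Set (Fin n → ℝ), MeasurableSet ω →
    ENNReal.ofReal (θ * s^n) ≤ volume (ω ∩ ocube n a s) →
    ∫ x in ocube n a s, ‖F x‖^2 ≤ (Λ^D)^2 * (4/θ * (∫ x in ω ∩ ocube n a s, ‖F x‖^2) + 10 * η^2 * s^n) := by
  obtain ⟨Λ, hΛ, H⟩ := remez_multi n (θ/2) (by positivity)
  refine ⟨Λ, hΛ, ?_⟩
  intro D a s hs F hFc P hP η hη hFP ω hω hvol
  have hmeas : MeasurableSet (ω ∩ ocube n a s) := hω.inter (ocube_meas _ _ _)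
  have hcc : IsCompact (ccube n a s) := isCompact_univ_pi fun _ => isCompact_Icc
  have hF2 : Continuous (fun x => ‖F x‖^2) := by fun_prop
  have hintc : IntegrableOn (fun x => ‖F x‖^2) (ccube n a s) := hF2.continuousOn.integrableOn_compact hcc
  have hinto : IntegrableOn (fun x => ‖F x‖^2) (ocube n a s) := hintc.mono_set (ocube_sub _ _ _)
  have hinte : IntegrableOn (fun x => ‖F x‖^2) (ω ∩ ocube n a s) := hinto.mono_set Set.inter_subset_right
  set I := ∫ x in ω ∩ ocube n a s, ‖F x‖^2 with hI
  have hI0 : 0 ≤ I := integral_nonneg fun x => by positivity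
  set V := θ * s^n with hV
  have hV0 : 0 < V := by positivity
  set τ := 2 * I / V + η^2 with hτ
  have hτ0 : 0 < τ := by positivity
  have hofin : volume (ω ∩ ocube n a s) ≠ ⊤ := by
    refine ne_top_of_le_ne_top ?_ (measure_mono Set.inter_subset_right)
    rw [ocube_vol]; exact ENNReal.pow_ne_top ENNReal.ofReal_ne_top
  have hmark := mul_meas_ge_le_integral_of_nonneg (μ := volume.restrict (ω ∩ ocube n a s))
    (f := fun x => ‖F x‖^2) (Filter.Eventually.of_forall fun x => by positivity) hinte τ
  rw [← hI, measureReal_restrict_apply (measurableSet_le measurable_const hF2.measurable)] at hmark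
  set E := (ω ∩ ocube n a s) ∩ {x | ‖F x‖^2 ≤ τ} with hE
  have hEm : MeasurableSet E := hmeas.inter (measurableSet_le hF2.measurable measurable_const)
  have hEfin : volume E ≠ ⊤ := ne_top_of_le_ne_top hofin (measure_mono Set.inter_subset_left)
  set Bd := {x | τ ≤ ‖F x‖^2} ∩ (ω ∩ ocube n a s) with hBd
  have hBfin : volume Bd ≠ ⊤ := ne_top_of_le_ne_top hofin (measure_mono Set.inter_subset_right)
  have hsub : ω ∩ ocube n a s ⊆ E ∪ Bd := by
    intro x hx
    rcases le_total (‖F x‖^2) τ with h | h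
    · exact Or.inl ⟨hx, h⟩
    · exact Or.inr ⟨h, hx⟩
  have h1 : V ≤ volume.real (ω ∩ ocube n a s) := by
    rw [Measure.real]
    exact (ENNReal.ofReal_le_iff_le_toReal hofin).1 hvol
  have h2 : volume.real (ω ∩ ocube n a s) ≤ volume.real E + volume.real Bd :=
    (measureReal_mono hsub (by
      exact ne_top_of_le_ne_top (ENNReal.add_ne_top.2 ⟨hEfin, hBfin⟩) (measure_union_le _ _))).trans (measureReal_union_le _ _)
  have h3 : volume.real Bd ≤ V/2 := by
    by_contra hc
    push Not at hc
    have : τ * (V/2) < τ * volume.real Bd := by gcongr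
    have h4 : τ * (V/2) = I + η^2 * V / 2 := by rw [hτ]; field_simp
    have : 0 < η^2 * V / 2 := by positivity
    linarith
  have h5 : ENNReal.ofReal (θ/2 * s^n) ≤ volume E := by
    rw [ENNReal.ofReal_le_iff_le_toReal hEfin]
    have : θ/2 * s^n = V/2 := by rw [hV]; ring
    rw [this]
    change V/2 ≤ volume.real E
    linarith
  have hsupP := H D a s hs P hP E hEm ((Set.inter_subset_left.trans Set.inter_subset_right).trans (ocube_sub _ _ _)) h5
    (Real.sqrt τ + η) (by
      intro x hx
      have hx1 : ‖F x‖ ≤ Real.sqrt τ := Real.le_sqrt_of_sq_le hx.2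
      have hx2 := hFP x (ocube_sub _ _ _ hx.1.2)
      have : P x = F x - (F x - P x) := by ring
      rw [this]
      exact (norm_sub_le _ _).trans (by linarith))
  have hΛD : 1 ≤ Λ^D := one_le_pow₀ hΛ
  have hpt : ∀ x ∈ ocube n a s, ‖F x‖^2 ≤ (Λ^D)^2 * (4 * I / V + 10 * η^2) := by
    intro x hx
    have hx' := ocube_sub _ _ _ hx
    have a1 := hsupP x hx'
    have a2 := hFP x hx'
    have a3 : ‖F x‖ ≤ Λ^D * (Real.sqrt τ + 2 * η) := by
      have : F x = (F x - P x) + P x := by ring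
      rw [this]
      refine (norm_add_le _ _).trans ?_
      nlinarith
    have a4 : ‖F x‖^2 ≤ (Λ^D * (Real.sqrt τ + 2 * η))^2 := by gcongr
    rw [mul_pow] at a4
    refine a4.trans ?_
    gcongr
    have hsq := Real.sq_sqrt hτ0.le
    have : 4 * I / V = 2 * (2 * I / V) := by ring
    rw [this]
    nlinarith [sq_nonneg (Real.sqrt τ - 2 * η)]
  have hvolo : volume.real (ocube n a s) = s^n := by
    rw [Measure.real, ocube_vol, ENNReal.toReal_pow, ENNReal.toReal_ofReal hs.le]
  calc ∫ x in ocube n a s, ‖F x‖^2 ≤ ∫ x in ocube n a s, (Λ^D)^2 * (4 * I / V + 10 * η^2) := by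
        refine setIntegral_mono_on hinto ?_ (ocube_meas _ _ _) hpt
        refine integrableOn_const ?_
        rw [ocube_vol]; exact ENNReal.pow_ne_top ENNReal.ofReal_ne_top
    _ = (Λ^D)^2 * (4/θ * I + 10 * η^2 * s^n) := by
        rw [setIntegral_const, hvolo, smul_eq_mul, hV]
        field_simp

/-- thickness transfers to cubes -/
lemma thick_cube (n : ℕ) (γ : ℝ) (hγ : 0 < γ) (ρ : En n → ℝ) (hρ : ∀ x, 0 < ρ x) (ω : Set (En n))
    (hω : MeasurableSet ω) (ht : ThickWith n γ ρ ω) (a : Fin n → ℝ) (s : ℝ) (hs : 0 < s)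
    (hle : ∀ x : En n, (x : Fin n → ℝ) ∈ ocube n a s → ρ x ≤ s/4) :
    ENNReal.ofReal (γ / 10^n * s^n) ≤ volume ((WithLp.toLp 2 ⁻¹' ω : Set (Fin n → ℝ)) ∩ ocube n a s) := by
  set Q : Set (En n) := {x | (WithLp.ofLp x : Fin n → ℝ) ∈ ocube n a s} with hQ
  set Q' : Set (En n) := {x | (WithLp.ofLp x : Fin n → ℝ) ∈ ocube n (fun i => a i + s/4) (s/2)} with hQ'
  have mp := PiLp.volume_preserving_toLp (Fin n)
  have mp2 := PiLp.volume_preserving_ofLp (Fin n)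
  have hQm : MeasurableSet Q := mp2.measurable (ocube_meas _ _ _)
  have hQ'v : volume Q' = ENNReal.ofReal (s/2) ^ n := by
    rw [← ocube_vol n (fun i => a i + s/4) (s/2)]
    exact mp2.measure_preimage (ocube_meas _ _ _).nullMeasurableSet
  have hv : volume ((WithLp.toLp 2 ⁻¹' ω : Set (Fin n → ℝ)) ∩ ocube n a s) = volume (ω ∩ Q) := by
    rw [← mp.measure_preimage (hω.inter hQm).nullMeasurableSet]
    rfl
  rw [hv]
  have hQ'Q : Q' ⊆ Q := by
    intro x hx i hi
    have := hx i hi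
    simp only [Set.mem_Ico] at this ⊢
    constructor <;> linarith [this.1, this.2]
  have hballs : ∀ y ∈ Q', Metric.ball y (ρ y) ⊆ Q := by
    intro y hy x hx i hi
    have h1 := hle y (hQ'Q hy)
    have h2 := hy i hi
    have h3 : |x i - y i| < ρ y := by
      refine lt_of_le_of_lt ?_ (Metric.mem_ball.1 hx)
      rw [dist_eq_norm, ← Real.norm_eq_abs]
      exact PiLp.norm_apply_le (x - y) i
    simp only [Set.mem_Ico] at h2 ⊢
    rw [abs_lt] at h3
    constructor <;> linarith [h2.1, h2.2, h3.1, h3.2]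
  obtain ⟨u, hu, hdis, hcov⟩ := Vitali.exists_disjoint_subfamily_covering_enlargement_closedBall Q' (fun x => x) ρ
    (s/4) (fun y hy => hle y (hQ'Q hy)) 5 (by norm_num)
  have hdis2 : u.PairwiseDisjoint fun y => Metric.ball y (ρ y) :=
    hdis.mono fun y => Metric.ball_subset_closedBall
  have hcount : u.Countable := by
    refine hdis2.countable_of_isOpen (fun y _ => Metric.isOpen_ball) fun y _ => ?_
    exact Metric.nonempty_ball.2 (hρ y)
  have hfive : ∀ y, volume (Metric.closedBall y (5 * ρ y)) = ENNReal.ofReal (5^n) * volume (Metric.ball y (ρ y)) := by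
    intro y
    rw [Measure.addHaar_closedBall volume y (by have := hρ y; positivity), Measure.addHaar_ball_of_pos volume y (hρ y),
      finrank_euclideanSpace_fin, mul_pow, ENNReal.ofReal_mul (by positivity), mul_assoc]
  have h1 : volume Q' ≤ ∑' y : u, volume (Metric.closedBall (y : En n) (5 * ρ y)) := by
    refine le_trans (measure_mono ?_) (measure_biUnion_le volume hcount (fun y => Metric.closedBall (y : En n) (5 * ρ y)))
    intro x hx
    obtain ⟨b, hb, hb2⟩ := hcov x hx
    exact Set.mem_biUnion hb (hb2 (Metric.mem_closedBall_self (hρ x).le))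
  have h2 : ∑' y : u, volume (ω ∩ Metric.ball (y : En n) (ρ y)) ≤ volume (ω ∩ Q) := by
    rw [← measure_biUnion hcount (f := fun y => ω ∩ Metric.ball (y : En n) (ρ y))
      (hdis2.mono fun y => Set.inter_subset_right) (fun y _ => hω.inter Metric.isOpen_ball.measurableSet)]
    refine measure_mono (Set.iUnion₂_subset fun y hy => ?_)
    exact Set.inter_subset_inter_right _ (hballs y (hu hy))
  have h3 : ENNReal.ofReal γ * volume Q' ≤ ENNReal.ofReal (5^n) * volume (ω ∩ Q) := by
    calc ENNReal.ofReal γ * volume Q' ≤ ENNReal.ofReal γ * ∑' y : u, volume (Metric.closedBall (y : En n) (5 * ρ y)) := by gcongr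
      _ = ENNReal.ofReal (5^n) * ∑' y : u, (ENNReal.ofReal γ * volume (Metric.ball (y : En n) (ρ y))) := by
        simp_rw [hfive, ENNReal.tsum_mul_left]
        ring
      _ ≤ ENNReal.ofReal (5^n) * ∑' y : u, volume (ω ∩ Metric.ball (y : En n) (ρ y)) := by
        gcongr with y
        exact ht y
      _ ≤ _ := by gcongr
  have h5 : (0:ℝ) < 5^n := by positivity
  rw [hQ'v, ← ENNReal.ofReal_pow (by positivity), ← ENNReal.ofReal_mul hγ.le] at h3
  have h6 : ENNReal.ofReal (5^n) * ENNReal.ofReal (γ / 10^n * s^n) ≤ ENNReal.ofReal (5^n) * volume (ω ∩ Q) := by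
    refine le_trans (le_of_eq ?_) h3
    rw [← ENNReal.ofReal_mul h5.le]
    congr 1
    rw [div_pow, show (10:ℝ) = 5*2 by norm_num, mul_pow]
    field_simp
  exact (ENNReal.mul_le_mul_iff_right (by simpa using h5) ENNReal.ofReal_ne_top).1 h6

def hprod (n : ℕ) (α : Fin n → ℕ) (x : Fin n → ℝ) : ℝ := ∏ j, hermite1 (α j) (x j)

def hA (n N : ℕ) : Finset (Fin n → ℕ) := Fintype.piFinset (fun _ => Finset.range (N+1))

lemma hA_card (n N : ℕ) : (hA n N).card = (N+1)^n := by
  simp [hA]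

lemma hA_mem (n N : ℕ) (α : Fin n → ℕ) (h : α ∈ hA n N) (j : Fin n) : α j ≤ N := by
  have := Fintype.mem_piFinset.1 h j
  simp at this; omega

def hF (n N : ℕ) (c : (Fin n → ℕ) → ℂ) (x : Fin n → ℝ) : ℂ := ∑ α ∈ hA n N, c α * (hprod n α x : ℂ)

def hS (n N : ℕ) (c : (Fin n → ℕ) → ℂ) : ℝ := ∑ α ∈ hA n N, ‖c α‖^2

lemma hS_nonneg (n N : ℕ) (c : (Fin n → ℕ) → ℂ) : 0 ≤ hS n N c := by
  unfold hS; positivity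

lemma span_expand (n N : ℕ) (f : En n → ℂ) (hf : f ∈ hermiteSpan n N) :
    ∃ c : (Fin n → ℕ) → ℂ, ∀ x : Fin n → ℝ, f (WithLp.toLp 2 x) = hF n N c x := by
  unfold hermiteSpan at hf
  induction hf using Submodule.span_induction with
  | mem g hg =>
    obtain ⟨α, hα, rfl⟩ := hg
    classical
    refine ⟨fun β => if β = α then 1 else 0, fun x => ?_⟩
    have hm : α ∈ hA n N := by
      refine Fintype.mem_piFinset.2 fun j => ?_
      have := Finset.single_le_sum (f := α) (fun i _ => Nat.zero_le _) (Finset.mem_univ j)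
      simp; omega
    simp [hF, hm, hermiteFun, hprod]
  | zero => exact ⟨0, fun x => by simp [hF]⟩
  | add f g _ _ hf hg =>
    obtain ⟨c, hc⟩ := hf
    obtain ⟨d, hd⟩ := hg
    exact ⟨c + d, fun x => by simp [hF, hc, hd, add_mul, Finset.sum_add_distrib]⟩
  | smul a f _ hf =>
    obtain ⟨c, hc⟩ := hf
    exact ⟨a • c, fun x => by simp [hF, hc, Finset.mul_sum, mul_assoc]⟩

lemma hprod_cont (n : ℕ) (α : Fin n → ℕ) : Continuous (hprod n α) := by
  unfold hprod
  exact continuous_finsetProd _ fun j _ => (hermite1_cont _).comp (continuous_apply j)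

lemma hF_cont (n N : ℕ) (c : (Fin n → ℕ) → ℂ) : Continuous (hF n N c) := by
  unfold hF
  refine continuous_finsetSum _ fun α _ => continuous_const.mul ?_
  exact Complex.continuous_ofReal.comp (hprod_cont n α)

lemma hprod_int (n : ℕ) (α β : Fin n → ℕ) : Integrable (fun x => hprod n α x * hprod n β x) := by
  simp_rw [hprod, ← Finset.prod_mul_distrib]
  exact Integrable.fintype_prod (f := fun j t => hermite1 (α j) t * hermite1 (β j) t) fun j => hermite1_int0 _ _

lemma hprod_orth (n : ℕ) (α β : Fin n → ℕ) :
    ∫ x, hprod n α x * hprod n β x = if α = β then 1 else 0 := by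
  simp_rw [hprod, ← Finset.prod_mul_distrib]
  rw [integral_fintype_prod_volume_eq_prod (fun j t => hermite1 (α j) t * hermite1 (β j) t)]
  simp_rw [hermite1_orth]
  split_ifs with h
  · simp [h]
  · obtain ⟨j, hj⟩ := Function.ne_iff.1 h
    exact Finset.prod_eq_zero (Finset.mem_univ j) (by simp [hj])

lemma hprod_mom_aux (n p : ℕ) (α : Fin n → ℕ) (j : Fin n) (x : Fin n → ℝ) :
    ((x j)^p)^2 * (hprod n α x * hprod n α x) =
      ∏ i, (fun (i : Fin n) (t : ℝ) => (t^(if i = j then p else 0))^2 * (hermite1 (α i) t * hermite1 (α i) t)) i (x i) := by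
  simp only [Finset.prod_mul_distrib, hprod]
  congr 1
  rw [Finset.prod_eq_single j] 
  · simp
  · intro b _ hb; simp [hb]
  · simp

lemma hmom_int (p k : ℕ) : Integrable (fun x : ℝ => (x^p)^2 * (hermite1 k x * hermite1 k x)) := by
  simp_rw [← pow_mul]
  exact hermite1_int _ _ _

lemma hprod_mom_int (n p : ℕ) (α : Fin n → ℕ) (j : Fin n) :
    Integrable (fun x : Fin n → ℝ => ((x j)^p)^2 * (hprod n α x * hprod n α x)) := by
  simp_rw [hprod_mom_aux]
  exact Integrable.fintype_prod fun i => hmom_int _ _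

lemma hprod_mom (n p : ℕ) (α : Fin n → ℕ) (j : Fin n) :
    ∫ x : Fin n → ℝ, ((x j)^p)^2 * (hprod n α x * hprod n α x) ≤ (2*((α j:ℝ)+p))^p := by
  simp_rw [hprod_mom_aux]
  rw [integral_fintype_prod_volume_eq_prod (fun (i : Fin n) (t : ℝ) => (t^(if i = j then p else 0))^2 * (hermite1 (α i) t * hermite1 (α i) t))]
  rw [Finset.prod_eq_single j]
  · simpa using hermite1_moment p (α j)
  · intro b _ hb; simp [hb, hermite1_orth]
  · simp

lemma hF_sq (n N : ℕ) (c : (Fin n → ℕ) → ℂ) (x : Fin n → ℝ) :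
    ‖hF n N c x‖^2 = ∑ α ∈ hA n N, ∑ β ∈ hA n N, (c α * (starRingEnd ℂ) (c β)).re * (hprod n α x * hprod n β x) := by
  have h : ((‖hF n N c x‖^2 : ℝ) : ℂ) = hF n N c x * (starRingEnd ℂ) (hF n N c x) := by
    rw [Complex.mul_conj, Complex.normSq_eq_norm_sq]
  have h2 := congrArg Complex.re h
  rw [Complex.ofReal_re] at h2
  rw [h2, hF, map_sum, Finset.sum_mul_sum, Complex.re_sum]
  refine Finset.sum_congr rfl fun α _ => ?_
  rw [Complex.re_sum]
  refine Finset.sum_congr rfl fun β _ => ?_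
  rw [← Complex.re_mul_ofReal]
  congr 1
  rw [map_mul, Complex.conj_ofReal]
  push_cast
  ring

lemma hF_int (n N : ℕ) (c : (Fin n → ℕ) → ℂ) : Integrable (fun x => ‖hF n N c x‖^2) := by
  simp_rw [hF_sq]
  exact integrable_finsetSum _ fun α _ => integrable_finsetSum _ fun β _ => (hprod_int n α β).const_mul _

lemma hF_norm (n N : ℕ) (c : (Fin n → ℕ) → ℂ) : ∫ x, ‖hF n N c x‖^2 = hS n N c := by
  simp_rw [hF_sq]
  rw [integral_finsetSum _ fun α _ => integrable_finsetSum _ fun β _ => (hprod_int n α β).const_mul _]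
  unfold hS
  refine Finset.sum_congr rfl fun α hα => ?_
  rw [integral_finsetSum _ fun β _ => (hprod_int n α β).const_mul _]
  simp_rw [integral_const_mul, hprod_orth]
  simp only [mul_ite, mul_one, mul_zero, Finset.sum_ite_eq, hα, if_true]
  rw [Complex.mul_conj, Complex.normSq_eq_norm_sq, Complex.ofReal_re]

lemma hF_cs (n N : ℕ) (c : (Fin n → ℕ) → ℂ) (x : Fin n → ℝ) :
    ‖hF n N c x‖^2 ≤ hS n N c * ∑ α ∈ hA n N, hprod n α x * hprod n α x := by
  have h1 : ‖hF n N c x‖ ≤ ∑ α ∈ hA n N, ‖c α‖ * |hprod n α x| := by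
    unfold hF
    refine (norm_sum_le _ _).trans (le_of_eq ?_)
    simp
  calc ‖hF n N c x‖^2 ≤ (∑ α ∈ hA n N, ‖c α‖ * |hprod n α x|)^2 := by gcongr
    _ ≤ (∑ α ∈ hA n N, ‖c α‖^2) * ∑ α ∈ hA n N, |hprod n α x|^2 := Finset.sum_mul_sq_le_sq_mul_sq _ _ _
    _ = _ := by simp [hS, sq]

def hbox (n : ℕ) (L : ℝ) : Set (Fin n → ℝ) := Set.pi Set.univ fun _ => Set.Ico (-L) L

lemma hbox_meas (n : ℕ) (L : ℝ) : MeasurableSet (hbox n L) :=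
  MeasurableSet.univ_pi fun _ => measurableSet_Ico

lemma hF_tail (n N : ℕ) (c : (Fin n → ℕ) → ℂ) (L : ℝ) (hL : 0 < L) :
    ∫ x in (hbox n L)ᶜ, ‖hF n N c x‖^2 ≤ hS n N c * ((N+1)^n * (n * ((4*N:ℝ)^N / (L^N)^2))) := by
  have hi : Integrable (fun x : Fin n → ℝ => hS n N c * ∑ α ∈ hA n N, ∑ j : Fin n, ((L^N)^2)⁻¹ * (((x j)^N)^2 * (hprod n α x * hprod n α x))) := by
    refine Integrable.const_mul ?_ _
    exact integrable_finsetSum _ fun α _ => integrable_finsetSum _ fun j _ => (hprod_mom_int n N α j).const_mul _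
  have hnn : ∀ x : Fin n → ℝ, 0 ≤ hS n N c * ∑ α ∈ hA n N, ∑ j : Fin n, ((L^N)^2)⁻¹ * (((x j)^N)^2 * (hprod n α x * hprod n α x)) := by
    intro x
    refine mul_nonneg (hS_nonneg _ _ _) (Finset.sum_nonneg fun α _ => Finset.sum_nonneg fun j _ => ?_)
    have := mul_self_nonneg (hprod n α x)
    positivity
  calc ∫ x in (hbox n L)ᶜ, ‖hF n N c x‖^2 
      ≤ ∫ x in (hbox n L)ᶜ, hS n N c * ∑ α ∈ hA n N, ∑ j : Fin n, ((L^N)^2)⁻¹ * (((x j)^N)^2 * (hprod n α x * hprod n α x)) := by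
        refine setIntegral_mono_on (hF_int n N c).integrableOn hi.integrableOn (hbox_meas n L).compl fun x hx => ?_
        refine (hF_cs n N c x).trans ?_
        refine mul_le_mul_of_nonneg_left ?_ (hS_nonneg _ _ _)
        refine Finset.sum_le_sum fun α _ => ?_
        simp only [hbox, Set.mem_compl_iff, Set.mem_univ_pi, not_forall] at hx
        obtain ⟨j, hj⟩ := hx
        have hj2 : L ≤ |x j| := by
          by_contra h
          push Not at h
          rw [abs_lt] at h
          exact hj ⟨h.1.le, h.2⟩
        have h0 := mul_self_nonneg (hprod n α x)
        refine le_trans ?_ (Finset.single_le_sum (f := fun j => ((L^N)^2)⁻¹ * (((x j)^N)^2 * (hprod n α x * hprod n α x)))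
          (fun i _ => by positivity) (Finset.mem_univ j))
        have h1 : (L^N)^2 ≤ ((x j)^N)^2 := by
          rw [← sq_abs ((x j)^N), abs_pow]
          gcongr
        rw [← mul_assoc]
        refine le_mul_of_one_le_left h0 ?_
        rw [inv_mul_eq_div, one_le_div (by positivity)]
        exact h1
    _ ≤ ∫ x, hS n N c * ∑ α ∈ hA n N, ∑ j : Fin n, ((L^N)^2)⁻¹ * (((x j)^N)^2 * (hprod n α x * hprod n α x)) := 
        setIntegral_le_integral hi (Filter.Eventually.of_forall hnn)
    _ ≤ _ := by
        rw [integral_const_mul]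
        refine mul_le_mul_of_nonneg_left ?_ (hS_nonneg _ _ _)
        rw [integral_finsetSum _ fun α _ => integrable_finsetSum _ fun j _ => (hprod_mom_int n N α j).const_mul _]
        calc _ ≤ ∑ α ∈ hA n N, (n * ((4*N:ℝ)^N / (L^N)^2)) := by
              refine Finset.sum_le_sum fun α hα => ?_
              rw [integral_finsetSum _ fun j _ => (hprod_mom_int n N α j).const_mul _]
              calc _ ≤ ∑ j : Fin n, ((4*N:ℝ)^N / (L^N)^2) := by
                    refine Finset.sum_le_sum fun j _ => ?_
                    rw [integral_const_mul, div_eq_inv_mul]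
                    refine mul_le_mul_of_nonneg_left ((hprod_mom n N α j).trans ?_) (by positivity)
                    have : (α j : ℝ) ≤ N := by exact_mod_cast hA_mem n N α hα j
                    refine pow_le_pow_left₀ (by positivity) ?_ _
                    linarith
                _ = _ := by simp
          _ = _ := by simp [hA_card]

lemma prod_diff {ι : Type*} (u : Finset ι) (a b : ι → ℝ) (B δ : ℝ) (hB : 1 ≤ B) (hδ : 0 ≤ δ)
    (ha : ∀ i ∈ u, |a i| ≤ B) (hb : ∀ i ∈ u, |b i| ≤ B) (hab : ∀ i ∈ u, |a i - b i| ≤ δ) :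
    |∏ i ∈ u, a i - ∏ i ∈ u, b i| ≤ u.card * B^u.card * δ := by
  classical
  induction u using Finset.induction_on with
  | empty => simp
  | insert j u hj ih =>
    have ih' := ih (fun i hi => ha i (Finset.mem_insert_of_mem hi)) (fun i hi => hb i (Finset.mem_insert_of_mem hi))
      (fun i hi => hab i (Finset.mem_insert_of_mem hi))
    rw [Finset.prod_insert hj, Finset.prod_insert hj, Finset.card_insert_of_notMem hj]
    have e : a j * ∏ i ∈ u, a i - b j * ∏ i ∈ u, b i = a j * (∏ i ∈ u, a i - ∏ i ∈ u, b i) + (a j - b j) * ∏ i ∈ u, b i := by ring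
    have hp : |∏ i ∈ u, b i| ≤ B^u.card := by
      rw [Finset.abs_prod, ← Finset.prod_const]
      exact Finset.prod_le_prod (fun _ _ => abs_nonneg _) fun i hi => hb i (Finset.mem_insert_of_mem hi)
    have h1 := ha j (Finset.mem_insert_self _ _)
    have h2 := hab j (Finset.mem_insert_self _ _)
    have hB0 : 0 ≤ B := by linarith
    rw [e]
    calc _ ≤ |a j| * |∏ i ∈ u, a i - ∏ i ∈ u, b i| + |a j - b j| * |∏ i ∈ u, b i| := by
          rw [← abs_mul, ← abs_mul]; exact abs_add_le _ _
      _ ≤ B * (u.card * B^u.card * δ) + δ * B^u.card := by gcongr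
      _ ≤ B * (u.card * B^u.card * δ) + δ * B^(u.card+1) := by
          gcongr
          · omega
      _ = _ := by push_cast; ring

/-- polynomial approximation on a cube -/
lemma hF_approx (n N D : ℕ) (c : (Fin n → ℕ) → ℂ) (hD : 1 ≤ D) (a : Fin n → ℝ) (s : ℝ) (hs : 0 < s) (δ : ℝ)
    (hδ : Real.sqrt (2*((N:ℝ)+D))^D*(2*((N:ℝ)+D+1))*s^D/(D-1).factorial ≤ δ) (hδ1 : δ ≤ 1) :
    ∃ P, SepPoly D n P ∧ ∀ x ∈ ccube n a s, ‖hF n N c x - P x‖ ≤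
      (N+1)^n * (Real.sqrt (hS n N c) * (n * (2*((N:ℝ)+1)+1)^n * δ)) := by
  have hδ0 : 0 ≤ δ := le_trans (by positivity) hδ
  have hq : ∀ (k : ℕ) (j : Fin n), ∃ q : Polynomial ℝ, q.natDegree ≤ D ∧ (k ≤ N → ∀ t ∈ Set.Icc (a j) (a j + s), 
      |hermite1 k t - q.eval t| ≤ δ) := by
    intro k j
    obtain ⟨q, h1, h2⟩ := hermite1_taylor k D hD (a j) s hs
    refine ⟨q, h1, fun hk t ht => (h2 t ht).trans (le_trans ?_ hδ)⟩
    have : (k:ℝ) ≤ N := by exact_mod_cast hk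
    gcongr
  choose q hqd hqa using hq
  refine ⟨fun x => ∑ α ∈ hA n N, c α * ((∏ j, (q (α j) j).eval (x j) : ℝ) : ℂ), ?_, ?_⟩
  · intro x j
    refine ⟨∑ α ∈ hA n N, Polynomial.C (c α * ((∏ i ∈ Finset.univ.erase j, (q (α i) i).eval (x i) : ℝ) : ℂ)) * 
      (q (α j) j).map (algebraMap ℝ ℂ), ?_, ?_⟩
    · refine Polynomial.natDegree_sum_le_of_forall_le _ _ fun α _ => ?_
      refine (Polynomial.natDegree_C_mul_le _ _).trans ((Polynomial.natDegree_map_le).trans (hqd _ _))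
    · intro t
      rw [Polynomial.eval_finsetSum]
      refine Finset.sum_congr rfl fun α _ => ?_
      rw [← Finset.mul_prod_erase _ _ (Finset.mem_univ j)]
      have : ∏ i ∈ Finset.univ.erase j, (q (α i) i).eval (Function.update x j t i) = ∏ i ∈ Finset.univ.erase j, (q (α i) i).eval (x i) := by
        refine Finset.prod_congr rfl fun i hi => ?_
        rw [Function.update_of_ne (Finset.ne_of_mem_erase hi)]
      rw [this, Function.update_self, Polynomial.eval_mul, Polynomial.eval_C]
      have h2 : Polynomial.eval (t:ℂ) ((q (α j) j).map (algebraMap ℝ ℂ)) = ((q (α j) j).eval t : ℝ) := by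
        rw [Polynomial.eval_map]
        exact (Polynomial.eval₂_at_apply (algebraMap ℝ ℂ) t)
      rw [h2]
      push_cast
      ring
  · intro x hx
    rw [hF, ← Finset.sum_sub_distrib]
    refine (norm_sum_le _ _).trans ?_
    have hcard : ((N:ℝ)+1)^n = (hA n N).card := by rw [hA_card]; push_cast; rfl
    rw [hcard, ← nsmul_eq_mul]
    refine Finset.sum_le_card_nsmul _ _ _ fun α hα => ?_
    rw [← mul_sub, norm_mul]
    have h1 : ‖c α‖ ≤ Real.sqrt (hS n N c) := by
      refine Real.le_sqrt_of_sq_le ?_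
      exact Finset.single_le_sum (f := fun α => ‖c α‖^2) (fun _ _ => by positivity) hα
    have h2 : ‖((hprod n α x : ℝ) : ℂ) - ((∏ j, (q (α j) j).eval (x j) : ℝ) : ℂ)‖ ≤ n * (2*((N:ℝ)+1)+1)^n * δ := by
      rw [← Complex.ofReal_sub, Complex.norm_real, Real.norm_eq_abs, hprod]
      have hd : ∀ j, |hermite1 (α j) (x j) - (q (α j) j).eval (x j)| ≤ δ := fun j => 
        hqa (α j) j (hA_mem n N α hα j) _ (hx j (Set.mem_univ j))
      have hs : ∀ j, |hermite1 (α j) (x j)| ≤ 2*((N:ℝ)+1) := fun j => by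
        refine (hermite1_sup _ _).trans ?_
        have : (α j:ℝ) ≤ N := by exact_mod_cast hA_mem n N α hα j
        gcongr
      have hN0 : (0:ℝ) ≤ N := Nat.cast_nonneg N
      have := prod_diff Finset.univ (fun j => hermite1 (α j) (x j)) (fun j => (q (α j) j).eval (x j)) (2*((N:ℝ)+1)+1) δ 
        (by linarith) hδ0 (fun j _ => (hs j).trans (by linarith)) (fun j _ => by
          have h3 := hd j
          have h4 := hs j
          rw [abs_sub_comm] at h3
          have h5 := abs_sub_abs_le_abs_sub ((q (α j) j).eval (x j)) (hermite1 (α j) (x j))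
          linarith) (fun j _ => hd j)
      simpa using this
    exact mul_le_mul h1 h2 (norm_nonneg _) (Real.sqrt_nonneg _)

def cubeA (n J : ℕ) (L s : ℝ) (m : Fin n → Fin J) : Fin n → ℝ := fun j => -L + (m j : ℕ) * s

lemma cube_union (n J : ℕ) (L s : ℝ) (hs : 0 < s) (hJ : J * s = 2 * L) :
    hbox n L = ⋃ m : Fin n → Fin J, ocube n (cubeA n J L s m) s := by
  ext x
  simp only [hbox, ocube, Set.mem_iUnion, Set.mem_univ_pi, cubeA, Set.mem_Ico]
  constructor
  · intro h
    have h1 : ∀ j, ⌊(x j + L)/s⌋₊ < J := fun j => by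
      rw [Nat.floor_lt (div_nonneg (by linarith [(h j).1]) hs.le), div_lt_iff₀ hs]
      linarith [(h j).2]
    refine ⟨fun j => ⟨⌊(x j + L)/s⌋₊, h1 j⟩, fun j => ?_⟩
    have h2 := Nat.floor_le (div_nonneg (a := x j + L) (by linarith [(h j).1]) hs.le)
    have h3 := Nat.lt_floor_add_one ((x j + L)/s)
    rw [le_div_iff₀ hs] at h2
    rw [div_lt_iff₀ hs] at h3
    constructor <;> simp only [] <;> linarith
  · rintro ⟨m, hm⟩ j
    have h1 := hm j
    have h2 : ((m j : ℕ) : ℝ) + 1 ≤ J := by exact_mod_cast (m j).2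
    have h3 : (0:ℝ) ≤ ((m j : ℕ) : ℝ) := Nat.cast_nonneg _
    constructor
    · nlinarith [h1.1]
    · nlinarith [h1.2]

lemma cube_disj (n J : ℕ) (L s : ℝ) (hs : 0 < s) :
    Pairwise (Function.onFun Disjoint fun m : Fin n → Fin J => ocube n (cubeA n J L s m) s) := by
  intro m m' hmm
  rw [Function.onFun, Set.disjoint_left]
  intro x hx hx'
  apply hmm
  funext j
  have h1 := hx j (Set.mem_univ j)
  have h2 := hx' j (Set.mem_univ j)
  simp only [cubeA, Set.mem_Ico] at h1 h2
  have h3 : ((m j : ℕ) : ℝ) < (m' j : ℕ) + 1 := by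
    by_contra h
    push Not at h
    nlinarith [h1.1, h2.2]
  have h4 : ((m' j : ℕ) : ℝ) < (m j : ℕ) + 1 := by
    by_contra h
    push Not at h
    nlinarith [h2.1, h1.2]
  have h5 : (m j : ℕ) < (m' j : ℕ) + 1 := by exact_mod_cast h3
  have h6 : (m' j : ℕ) < (m j : ℕ) + 1 := by exact_mod_cast h4
  exact Fin.ext (by omega)

lemma cube_sum (n J : ℕ) (L s : ℝ) (hs : 0 < s) (hJ : J * s = 2 * L) (g : (Fin n → ℝ) → ℝ) (hg : Integrable g)
    (hg0 : ∀ x, 0 ≤ g x) (ω : Set (Fin n → ℝ)) (hω : MeasurableSet ω) (A B E : ℝ) (hA : 0 ≤ A) (hB : 0 ≤ B)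
    (H : ∀ m : Fin n → Fin J, ∫ x in ocube n (cubeA n J L s m) s, g x ≤
      A * (B * (∫ x in ω ∩ ocube n (cubeA n J L s m) s, g x) + E * s^n)) :
    ∫ x in hbox n L, g x ≤ A * (B * (∫ x in ω, g x) + E * (2*L)^n) := by
  have hd := cube_disj n J L s hs
  have h1 : ∫ x in hbox n L, g x = ∑ m : Fin n → Fin J, ∫ x in ocube n (cubeA n J L s m) s, g x := by
    rw [cube_union n J L s hs hJ]
    exact integral_iUnion_fintype (fun m => ocube_meas _ _ _) hd fun m => hg.integrableOn
  have h2 : ∑ m : Fin n → Fin J, ∫ x in ω ∩ ocube n (cubeA n J L s m) s, g x ≤ ∫ x in ω, g x := by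
    rw [← integral_iUnion_fintype (fun m => hω.inter (ocube_meas _ _ _)) (fun m m' h => (hd h).mono Set.inter_subset_right Set.inter_subset_right) fun m => hg.integrableOn]
    refine setIntegral_mono_set hg.integrableOn (Filter.Eventually.of_forall hg0) (Filter.Eventually.of_forall ?_)
    exact Set.iUnion_subset fun m => Set.inter_subset_left
  rw [h1]
  calc _ ≤ ∑ m : Fin n → Fin J, A * (B * (∫ x in ω ∩ ocube n (cubeA n J L s m) s, g x) + E * s^n) := Finset.sum_le_sum fun m _ => H m
    _ = A * (B * (∑ m : Fin n → Fin J, ∫ x in ω ∩ ocube n (cubeA n J L s m) s, g x) + E * (2*L)^n) := by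
        rw [← Finset.mul_sum, Finset.sum_add_distrib, ← Finset.mul_sum, ← hJ]
        simp only [Finset.sum_const, Finset.card_univ, Fintype.card_fun, Fintype.card_fin, nsmul_eq_mul, Nat.cast_pow]
        ring
    _ ≤ _ := by gcongr

lemma num_N (N M D : ℕ) (hNM : N ≤ M^2) (hMD : M ≤ D) : N + 1 ≤ 4^D := by
  have h1 : M + 1 ≤ 2^M := Nat.lt_two_pow_self
  have h2 : (M+1)^2 ≤ (2^M)^2 := Nat.pow_le_pow_left h1 2
  have h3 : (2^M)^2 = 4^M := by rw [← pow_mul, mul_comm, pow_mul]; norm_num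
  have h4 : 4^M ≤ 4^D := Nat.pow_le_pow_right (by norm_num) hMD
  nlinarith

lemma num_delta (K N M : ℕ) (L1 s : ℝ) (hL1 : 1 ≤ L1) (hK : 1 ≤ K) (hM : 1 ≤ M) (hMN : M ≤ N) (hNM : N ≤ M^2)
    (hs : 0 < s) (hsN : s * Real.sqrt N ≤ 4 * L1 * M) :
    Real.sqrt (2*((N:ℝ)+(K*M:ℕ)))^(K*M)*(2*((N:ℝ)+(K*M:ℕ)+1))*s^(K*M)/((K*M)-1).factorial ≤
      (32 * (4 * Real.exp 1 * L1 * Real.sqrt (2*((K:ℝ)+1)) / K))^(K*M) := by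
  have hMD : M ≤ K*M := Nat.le_mul_of_pos_left M hK
  have hKD : ((K*M:ℕ):ℝ) = K*M := by push_cast; ring
  have hN := num_N N M (K*M) hNM hMD
  generalize hDD : K*M = D at *
  have hD : 1 ≤ D := by omega
  have hK0 : (0:ℝ) < K := by exact_mod_cast hK
  have hD0 : (0:ℝ) < D := by exact_mod_cast hD
  set r := Real.sqrt (2*((K:ℝ)+1)) with hr
  have h1 : Real.sqrt (2*((N:ℝ)+D)) ≤ r * Real.sqrt N := by
    rw [hr, ← Real.sqrt_mul (by positivity)]
    apply Real.sqrt_le_sqrt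
    have : (M:ℝ) ≤ N := by exact_mod_cast hMN
    rw [hKD]; nlinarith
  have h2 : Real.sqrt (2*((N:ℝ)+D)) * s ≤ r * (4 * L1 / K) * D := by
    calc _ ≤ r * Real.sqrt N * s := by gcongr
      _ = r * (s * Real.sqrt N) := by ring
      _ ≤ r * (4 * L1 * M) := by gcongr
      _ = _ := by rw [hKD]; field_simp
  have hfac : ((D-1).factorial : ℝ) = D.factorial / D := by
    rw [← Nat.mul_factorial_pred (by omega : D ≠ 0)]
    push_cast; field_simp
  have he : (D:ℝ)^D / D.factorial ≤ (Real.exp 1)^D := by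
    rw [← Real.exp_nat_mul, mul_one]
    exact Real.pow_div_factorial_le_exp _ (by positivity) _
  have hpoly : (D:ℝ) * (2*((N:ℝ)+D+1)) ≤ 32^D := by
    have a1 : D + 1 ≤ 2^D := Nat.lt_two_pow_self
    have a2 : 2^D ≤ 4^D := Nat.pow_le_pow_left (by norm_num) D
    have a3 : 4 ≤ 4^D := by calc 4 = 4^1 := by norm_num
                               _ ≤ 4^D := Nat.pow_le_pow_right (by norm_num) hD
    have a4 : D * (2*(N+D+1)) ≤ 32^D := by
      calc D * (2*(N+D+1)) ≤ 2^D * (2*(4^D + 4^D)) := Nat.mul_le_mul (by omega) (by omega)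
        _ = 2^D * 4^D * 4 := by ring
        _ ≤ 2^D * 4^D * 4^D := by gcongr
        _ = 32^D := by rw [← mul_pow, ← mul_pow]; norm_num
    exact_mod_cast a4
  calc _ = (Real.sqrt (2*((N:ℝ)+D)) * s)^D * ((D:ℝ) * (2*((N:ℝ)+D+1))) / D.factorial := by
        rw [hfac, mul_pow]; field_simp
    _ ≤ (r * (4 * L1 / K) * D)^D * 32^D / D.factorial := by gcongr
    _ = (r * (4 * L1 / K))^D * 32^D * ((D:ℝ)^D / D.factorial) := by rw [mul_pow _ (D:ℝ)]; ring
    _ ≤ (r * (4 * L1 / K))^D * 32^D * (Real.exp 1)^D := by gcongr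
    _ = _ := by rw [← mul_pow, ← mul_pow]; congr 1; ring

lemma num_pow (D n : ℕ) (t Λ p w q u x v : ℝ) :
    t^D * (Λ^D)^2 * ((p^D)^n * (w^D * (q^D)^n * (u*x)^D))^2 * (v^D)^n =
      (t * Λ^2 * (p^n*(w*q^n*u))^2 * v^n * x^2)^D := by
  ring

lemma num_all (n : ℕ) (Λ L1 : ℝ) (hΛ : 1 ≤ Λ) (hL1 : 1 ≤ L1) : ∃ K : ℕ, 1 ≤ K ∧ ∀ N M : ℕ, 1 ≤ M → M ≤ N → N ≤ M^2 →
    ∀ s : ℝ, 0 < s → s * Real.sqrt N ≤ 4 * L1 * M → ∃ δ : ℝ, 0 < δ ∧ δ ≤ 1 ∧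
    Real.sqrt (2*((N:ℝ)+(K*M:ℕ)))^(K*M)*(2*((N:ℝ)+(K*M:ℕ)+1))*s^(K*M)/((K*M)-1).factorial ≤ δ ∧
    10 * (Λ^(K*M))^2 * (((N:ℝ)+1)^n * (((n:ℝ)+1) * (2*((N:ℝ)+1)+1)^n * δ))^2 * (2*(L1 * Real.sqrt N))^n ≤ 1/4 := by
  set G : ℝ := 10 * Λ^2 * (4^n*((n+1)*12^n*32))^2 * (8*L1)^n with hG
  have hG1 : 1024 ≤ G := by
    have a1 : (1:ℝ) ≤ Λ^2 := one_le_pow₀ hΛ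
    have a2 : (1:ℝ) ≤ 4^n := one_le_pow₀ (by norm_num)
    have a3 : (1:ℝ) ≤ 12^n := one_le_pow₀ (by norm_num)
    have a4 : (1:ℝ) ≤ (8*L1)^n := one_le_pow₀ (by linarith)
    have a5 : (0:ℝ) ≤ n := Nat.cast_nonneg _
    calc (1024:ℝ) ≤ 10 * 1 * (1*((0+1)*1*32))^2 * 1 := by norm_num
      _ ≤ G := by rw [hG]; gcongr
  obtain ⟨K, hK⟩ := exists_nat_ge (4 * G * (64 * (Real.exp 1)^2 * L1^2))
  have he1 : (1:ℝ) ≤ Real.exp 1 := Real.one_le_exp (by norm_num)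
  have hK1 : (1:ℝ) ≤ K := by
    refine le_trans ?_ hK
    calc (1:ℝ) ≤ 4 * 1024 * (64 * 1^2 * 1^2) := by norm_num
      _ ≤ _ := by gcongr
  have hK0 : (0:ℝ) < K := by linarith
  set x : ℝ := 4 * Real.exp 1 * L1 * Real.sqrt (2*((K:ℝ)+1)) / K with hx
  have hx0 : 0 < x := by
    rw [hx]
    have := Real.sqrt_pos.2 (show (0:ℝ) < 2*((K:ℝ)+1) by positivity)
    positivity
  have hx2 : G * x^2 ≤ 1/4 := by
    have : x^2 ≤ 64 * (Real.exp 1)^2 * L1^2 / K := by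
      rw [hx, div_pow, mul_pow, Real.sq_sqrt (by positivity), div_le_div_iff₀ (by positivity) hK0]
      have : 2*((K:ℝ)+1) ≤ 4 * K := by linarith
      calc _ ≤ (4 * Real.exp 1 * L1)^2 * (4 * K) * K := by gcongr
        _ = _ := by ring
    calc G * x^2 ≤ G * (64 * (Real.exp 1)^2 * L1^2 / K) := by gcongr
      _ ≤ 1/4 := by
        rw [← mul_div_assoc, div_le_div_iff₀ hK0 (by norm_num)]
        linarith
  have hx3 : 32 * x ≤ 1 := by
    have : (32*x)^2 ≤ 1^2 := by nlinarith [sq_nonneg x]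
    exact (sq_le_sq₀ (by positivity) (by norm_num)).1 this
  refine ⟨K, by exact_mod_cast hK1, ?_⟩
  intro N M hM hMN hNM s hs hsN
  have hKn : 1 ≤ K := by exact_mod_cast hK1
  refine ⟨(32*x)^(K*M), by positivity, pow_le_one₀ (by positivity) hx3, 
    num_delta K N M L1 s hL1 hKn hM hMN hNM hs hsN, ?_⟩
  have hMD : M ≤ K*M := Nat.le_mul_of_pos_left M hKn
  have hN := num_N N M (K*M) hNM hMD
  have hD : 1 ≤ K*M := by omega
  generalize K*M = D at *
  have hD0 : D ≠ 0 := by omega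
  have hN' : (N:ℝ)+1 ≤ 4^D := by exact_mod_cast hN
  have hN1 : (1:ℝ) ≤ N := by exact_mod_cast hM.trans hMN
  have b1 : (N:ℝ)+1 ≤ 4^D := hN'
  have b2 : (n:ℝ)+1 ≤ (n+1)^D := le_self_pow₀ (by linarith [(Nat.cast_nonneg n : (0:ℝ) ≤ n)]) hD0
  have b3 : 2*((N:ℝ)+1)+1 ≤ 12^D := by
    have : (3:ℝ) ≤ 3^D := le_self_pow₀ (by norm_num) hD0
    calc 2*((N:ℝ)+1)+1 ≤ 3 * ((N:ℝ)+1) := by linarith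
      _ ≤ 3^D * 4^D := by gcongr
      _ = 12^D := by rw [← mul_pow]; norm_num
  have b4 : 2*(L1 * Real.sqrt N) ≤ (8*L1)^D := by
    have h1 : (2*L1) ≤ (2*L1)^D := le_self_pow₀ (by linarith) hD0
    have h2 : Real.sqrt N ≤ N := by
      rw [Real.sqrt_le_left (by linarith)]
      nlinarith
    calc 2*(L1 * Real.sqrt N) = (2*L1) * Real.sqrt N := by ring
      _ ≤ (2*L1)^D * 4^D := by
        gcongr
        linarith
      _ = (8*L1)^D := by rw [← mul_pow]; ring_nf
  have b5 : (10:ℝ) ≤ 10^D := le_self_pow₀ (by norm_num) hD0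
  calc _ ≤ 10^D * (Λ^D)^2 * ((4^D)^n * ((n+1)^D * (12^D)^n * (32*x)^D))^2 * ((8*L1)^D)^n := by gcongr
    _ = (G * x^2)^D := by
        rw [hG]
        exact num_pow _ _ _ _ _ _ _ _ _ _
    _ ≤ (1/4)^D := by gcongr
    _ ≤ 1/4 := by
        conv_rhs => rw [← pow_one (1/4:ℝ)]
        exact pow_le_pow_of_le_one (by norm_num) (by norm_num) hD

lemma choose_L1 (n : ℕ) (ε R : ℝ) (hε : 0 < ε) (hε1 : ε ≤ 1) (hR : 0 < R) :
    ∃ L1 : ℝ, 1 ≤ L1 ∧ 8*4^n ≤ L1^2 ∧ R * (1 + n*L1^2)^((1-ε)/2) ≤ L1/2 := by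
  set L1 := max (8*4^n) ((2*R*(n+1))^(1/ε)) with hL
  have h4 : (1:ℝ) ≤ 4^n := one_le_pow₀ (by norm_num)
  have h8 : 8*4^n ≤ L1 := le_max_left _ _
  have h1 : 1 ≤ L1 := by linarith
  have h0 : 0 < L1 := by linarith
  refine ⟨L1, h1, by nlinarith, ?_⟩
  have h2 : 2*R*(n+1) ≤ L1^ε := by
    have h3 : (2*R*(n+1))^(1/ε) ≤ L1 := le_max_right _ _
    calc 2*R*((n:ℝ)+1) = ((2*R*(n+1))^(1/ε))^ε := by
          rw [← Real.rpow_mul (by positivity), one_div_mul_cancel hε.ne', Real.rpow_one]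
      _ ≤ L1^ε := Real.rpow_le_rpow (by positivity) h3 hε.le
  have hn : (1:ℝ) ≤ n+1 := by linarith [(Nat.cast_nonneg n : (0:ℝ) ≤ n)]
  have h5 : (1 + n*L1^2)^((1-ε)/2) ≤ ((n:ℝ)+1) * L1^(1-ε) := by
    calc (1 + n*L1^2)^((1-ε)/2) ≤ (((n:ℝ)+1)*L1^2)^((1-ε)/2) := by
          apply Real.rpow_le_rpow (by positivity) _ (by linarith)
          nlinarith
      _ = ((n:ℝ)+1)^((1-ε)/2) * L1^(1-ε) := by
          rw [Real.mul_rpow (by positivity) (by positivity), ← Real.rpow_natCast L1 2, ← Real.rpow_mul h0.le]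
          congr 2
          push_cast; ring
      _ ≤ _ := by
          gcongr
          calc ((n:ℝ)+1)^((1-ε)/2) ≤ ((n:ℝ)+1)^(1:ℝ) := Real.rpow_le_rpow_of_exponent_le hn (by linarith)
            _ = _ := Real.rpow_one _
  have h6 : L1^(1-ε) * L1^ε = L1 := by
    rw [← Real.rpow_add h0, sub_add_cancel, Real.rpow_one]
  have h7 : 0 ≤ L1^(1-ε) := by positivity
  calc R * (1 + n*L1^2)^((1-ε)/2) ≤ R * (((n:ℝ)+1) * L1^(1-ε)) := by gcongr
    _ = L1^(1-ε) * (2*R*(n+1)) / 2 := by ring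
    _ ≤ L1^(1-ε) * L1^ε / 2 := by gcongr
    _ = _ := by rw [h6]

lemma tail_num (n N : ℕ) (L1 : ℝ) (hN : 1 ≤ N) (h1 : 1 ≤ L1) (h2 : 8*4^n ≤ L1^2) :
    ((N:ℝ)+1)^n * (n * ((4*N:ℝ)^N / ((L1*Real.sqrt N)^N)^2)) ≤ 1/2 := by
  have hN0 : (0:ℝ) < N := by exact_mod_cast hN
  have e : ((4*N:ℝ)^N / ((L1*Real.sqrt N)^N)^2) = (4/L1^2)^N := by
    rw [pow_right_comm, mul_pow L1, Real.sq_sqrt hN0.le, ← div_pow]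
    congr 1
    field_simp
  rw [e]
  have a1 : ((N:ℝ)+1)^n ≤ (2^n)^N := by
    rw [pow_right_comm]
    have : N + 1 ≤ 2^N := Nat.lt_two_pow_self
    have : (N:ℝ)+1 ≤ 2^N := by exact_mod_cast this
    gcongr
  have a2 : (n:ℝ) ≤ (2^n)^N := by
    have : n < 2^n := Nat.lt_two_pow_self
    have h : (n:ℝ) ≤ 2^n := by exact_mod_cast this.le
    exact h.trans (le_self_pow₀ (one_le_pow₀ (by norm_num)) (by omega))
  calc _ ≤ (2^n)^N * ((2^n)^N * (4/L1^2)^N) := by gcongr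
    _ = (4^n*4/L1^2)^N := by
      rw [← mul_pow, ← mul_pow]
      congr 1
      rw [show (4:ℝ)^n = 2^n*2^n by rw [← mul_pow]; norm_num]
      ring
    _ ≤ (1/2)^N := by
      refine pow_le_pow_left₀ (by positivity) ?_ _
      rw [div_le_div_iff₀ (by positivity) (by norm_num)]
      linarith
    _ ≤ 1/2 := by
      conv_rhs => rw [← pow_one (1/2:ℝ)]
      exact pow_le_pow_of_le_one (by norm_num) (by norm_num) hN

lemma params (ε : ℝ) (hε : 0 < ε) (hε1 : ε ≤ 1) (N : ℕ) (hN : 1 ≤ N) : ∃ J M : ℕ, 1 ≤ J ∧ 1 ≤ M ∧ M ≤ N ∧ N ≤ M^2 ∧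
    (M:ℝ) ≤ 2 * (N:ℝ)^(1-ε/2) ∧ (J:ℝ) * (N:ℝ)^((1-ε)/2) ≤ Real.sqrt N ∧ (N:ℝ) ≤ 2*J*M := by
  have hN1 : (1:ℝ) ≤ N := by exact_mod_cast hN
  have hN0 : (0:ℝ) < N := by linarith
  have hp1 : 1 ≤ (N:ℝ)^(1-ε/2) := Real.one_le_rpow hN1 (by linarith)
  have hp2 : 1 ≤ (N:ℝ)^(ε/2) := Real.one_le_rpow hN1 (by linarith)
  have hJ1 : 1 ≤ ⌊(N:ℝ)^(ε/2)⌋₊ := by rw [Nat.one_le_floor_iff]; exact hp2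
  have hJl := Nat.floor_le (show 0 ≤ (N:ℝ)^(ε/2) by positivity)
  have hJu := Nat.lt_floor_add_one ((N:ℝ)^(ε/2))
  have hMl := Nat.le_ceil ((N:ℝ)^(1-ε/2))
  have hMu := Nat.ceil_lt_add_one (show 0 ≤ (N:ℝ)^(1-ε/2) by positivity)
  have hMN : ⌈(N:ℝ)^(1-ε/2)⌉₊ ≤ N := by
    rw [Nat.ceil_le]
    calc (N:ℝ)^(1-ε/2) ≤ (N:ℝ)^(1:ℝ) := Real.rpow_le_rpow_of_exponent_le hN1 (by linarith)
      _ = N := Real.rpow_one _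
  have hNM : (N:ℝ) ≤ (⌈(N:ℝ)^(1-ε/2)⌉₊:ℝ)^2 := by
    calc (N:ℝ) = (N:ℝ)^(1:ℝ) := (Real.rpow_one _).symm
      _ ≤ (N:ℝ)^((1-ε/2)+(1-ε/2)) := Real.rpow_le_rpow_of_exponent_le hN1 (by linarith)
      _ = ((N:ℝ)^(1-ε/2))^2 := by rw [Real.rpow_add hN0, sq]
      _ ≤ _ := by gcongr
  have hM1 : (1:ℝ) ≤ ⌈(N:ℝ)^(1-ε/2)⌉₊ := hp1.trans hMl
  generalize ⌊(N:ℝ)^(ε/2)⌋₊ = J at *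
  generalize ⌈(N:ℝ)^(1-ε/2)⌉₊ = M at *
  refine ⟨J, M, hJ1, by exact_mod_cast hM1, hMN, by exact_mod_cast hNM, by linarith, ?_, ?_⟩
  · calc (J:ℝ) * (N:ℝ)^((1-ε)/2) ≤ (N:ℝ)^(ε/2) * (N:ℝ)^((1-ε)/2) := by gcongr
      _ = Real.sqrt N := by
        rw [← Real.rpow_add hN0, Real.sqrt_eq_rpow]; congr 1; ring
  · have hJ1' : (1:ℝ) ≤ J := by exact_mod_cast hJ1
    have : (N:ℝ) = (N:ℝ)^(ε/2) * (N:ℝ)^(1-ε/2) := by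
      rw [← Real.rpow_add hN0]; simp
    rw [this]
    gcongr
    linarith

/-- bound of the density in the box -/
lemma rho_box (n N : ℕ) (hN : 1 ≤ N) (ε R L1 : ℝ) (hε : 0 < ε) (hε1 : ε ≤ 1) (hR : 0 < R) (h1 : 1 ≤ L1)
    (hL1 : R * (1 + n*L1^2)^((1-ε)/2) ≤ L1/2) (x : En n) (hx : (WithLp.ofLp x : Fin n → ℝ) ∈ hbox n (L1 * Real.sqrt N)) :
    R * jap n x ^ (1-ε) ≤ L1/2 * (N:ℝ)^((1-ε)/2) := by
  have hN1 : (1:ℝ) ≤ N := by exact_mod_cast hN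
  have hN0 : (0:ℝ) < N := by linarith
  have hx2 : ‖x‖^2 ≤ n * (L1^2 * N) := by
    rw [EuclideanSpace.norm_sq_eq]
    calc _ ≤ ∑ i : Fin n, L1^2 * (N:ℝ) := by
          refine Finset.sum_le_sum fun i _ => ?_
          have := hx i (Set.mem_univ i)
          have h2 : |x i| ≤ L1 * Real.sqrt N := abs_le.2 ⟨this.1, this.2.le⟩
          calc ‖x i‖^2 ≤ (L1 * Real.sqrt N)^2 := by
                rw [Real.norm_eq_abs]; gcongr
            _ = _ := by rw [mul_pow, Real.sq_sqrt hN0.le]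
      _ = _ := by simp
  have e : jap n x ^ (1-ε) = (1 + ‖x‖^2)^((1-ε)/2) := by
    rw [jap, Real.sqrt_eq_rpow, ← Real.rpow_mul (by positivity)]
    congr 1; ring
  rw [e]
  calc R * (1 + ‖x‖^2)^((1-ε)/2) ≤ R * ((1 + n*L1^2) * N)^((1-ε)/2) := by
        refine mul_le_mul_of_nonneg_left (Real.rpow_le_rpow (by positivity) ?_ (by linarith)) hR.le
        nlinarith
    _ = R * (1 + n*L1^2)^((1-ε)/2) * (N:ℝ)^((1-ε)/2) := by
        rw [Real.mul_rpow (by positivity) hN0.le]; ring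
    _ ≤ _ := by gcongr

/-- core estimate on the coordinate space -/
lemma core_est (n : ℕ) (θ L1 : ℝ) (hθ : 0 < θ) (h1 : 1 ≤ L1) (h2 : 8*4^n ≤ L1^2) :
    ∃ (Λ : ℝ) (K : ℕ), 1 ≤ Λ ∧ 1 ≤ K ∧ ∀ N J M : ℕ, 1 ≤ N → 1 ≤ J → 1 ≤ M → M ≤ N → N ≤ M^2 → (N:ℝ) ≤ 2*J*M →
      ∀ ω : Set (Fin n → ℝ), MeasurableSet ω → 
      (∀ m : Fin n → Fin J, ENNReal.ofReal (θ * (2*(L1*Real.sqrt N)/J)^n) ≤ 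
        volume (ω ∩ ocube n (cubeA n J (L1*Real.sqrt N) (2*(L1*Real.sqrt N)/J) m) (2*(L1*Real.sqrt N)/J))) →
      ∀ c : (Fin n → ℕ) → ℂ, hS n N c ≤ 16/θ * (Λ^(K*M))^2 * ∫ x in ω, ‖hF n N c x‖^2 := by
  obtain ⟨Λ, hΛ, HL⟩ := local_est n θ hθ
  obtain ⟨K, hK, HK⟩ := num_all n Λ L1 hΛ h1
  refine ⟨Λ, K, hΛ, hK, ?_⟩
  intro N J M hN hJ hM hMN hNM hNJ ω hω hvol c
  have hN0 : (0:ℝ) < N := by exact_mod_cast hN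
  have hJ0 : (0:ℝ) < J := by exact_mod_cast hJ
  have hsq : 0 < Real.sqrt N := Real.sqrt_pos.2 hN0
  have hI : 0 ≤ ∫ x in ω, ‖hF n N c x‖^2 := integral_nonneg fun x => by positivity
  rcases (hS_nonneg n N c).eq_or_lt with h0 | hS0
  · rw [← h0]; positivity
  set L := L1*Real.sqrt N with hL
  have hL0 : 0 < L := by positivity
  set s := 2*L/J with hs
  have hs0 : 0 < s := by positivity
  have hsN : s * Real.sqrt N ≤ 4*L1*M := by
    have : Real.sqrt N * Real.sqrt N = N := Real.mul_self_sqrt hN0.le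
    calc s * Real.sqrt N = 2 * L1 * (Real.sqrt N * Real.sqrt N) / J := by rw [hs, hL]; ring
      _ ≤ 4*L1*M := by
        rw [this, div_le_iff₀ hJ0]
        nlinarith
  obtain ⟨δ, hδ0, hδ1, hδ2, hδ3⟩ := HK N M hM hMN hNM s hs0 hsN
  have hD : 1 ≤ K*M := Nat.mul_pos hK hM
  generalize K*M = D at *
  set η1 : ℝ := ((N:ℝ)+1)^n * (((n:ℝ)+1) * (2*((N:ℝ)+1)+1)^n * δ) with hη1
  have hη10 : 0 < η1 := by positivity
  set S := hS n N c with hSS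
  have hη : 0 < Real.sqrt S * η1 := mul_pos (Real.sqrt_pos.2 hS0) hη10
  have hJs : J * s = 2 * L := by rw [hs]; field_simp
  have hcub : ∫ x in hbox n L, ‖hF n N c x‖^2 ≤ (Λ^D)^2 * (4/θ * (∫ x in ω, ‖hF n N c x‖^2) + (10*(Real.sqrt S*η1)^2) * (2*L)^n) := by
    refine cube_sum n J L s hs0 hJs _ (hF_int n N c) (fun x => by positivity) ω hω _ _ _ (by positivity) (by positivity) fun m => ?_
    obtain ⟨P, hP, hP2⟩ := hF_approx n N D c hD (cubeA n J L s m) s hs0 δ hδ2 hδ1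
    refine HL D (cubeA n J L s m) s hs0 (hF n N c) (hF_cont n N c) P hP _ hη (fun x hx => (hP2 x hx).trans ?_) ω hω (hvol m)
    rw [hη1]
    calc _ = Real.sqrt S * (((N:ℝ)+1)^n * ((n:ℝ) * (2*((N:ℝ)+1)+1)^n * δ)) := by ring
      _ ≤ _ := by
        gcongr
        linarith
  have htail := hF_tail n N c L hL0
  have htn := tail_num n N L1 hN h1 h2
  have hsplit := integral_add_compl (hbox_meas n L) (hF_int n N c)
  rw [hF_norm] at hsplit
  have ht2 : S * ((N+1)^n * (n * ((4*N:ℝ)^N / (L^N)^2))) ≤ S * (1/2) := by gcongr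
  have hexp : (Λ^D)^2 * (4/θ * (∫ x in ω, ‖hF n N c x‖^2) + (10*(Real.sqrt S*η1)^2) * (2*L)^n) =
      4/θ * (Λ^D)^2 * (∫ x in ω, ‖hF n N c x‖^2) + S * (10 * (Λ^D)^2 * η1^2 * (2*L)^n) := by
    rw [mul_pow, Real.sq_sqrt hS0.le]; ring
  rw [hexp] at hcub
  have h4 : S * (10 * (Λ^D)^2 * η1^2 * (2*L)^n) ≤ S * (1/4) := by gcongr
  have h5 : 16/θ * (Λ^D)^2 * (∫ x in ω, ‖hF n N c x‖^2) = 4 * (4/θ * (Λ^D)^2 * (∫ x in ω, ‖hF n N c x‖^2)) := by ring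
  rw [h5]
  linarith

theorem spectral_final (n : ℕ) :
    ∃ κt : ℝ, 1 < κt ∧
      ∀ ε m R γ : ℝ, 0 < ε → ε ≤ 1 → 0 < m → 0 < R → 0 < γ → γ ≤ 1 →
        ∃ κ Ct : ℝ, 0 < κ ∧ 0 < Ct ∧
          ∀ ρ : En n → ℝ, (∀ x, 0 < ρ x) → LipschitzWith (1/2 : ℝ≥0) ρ →
            (∀ x, m ≤ ρ x) → (∀ x, ρ x ≤ R * jap n x ^ (1 - ε)) →
            ∀ ω : Set (En n), MeasurableSet ω → ThickWith n γ ρ ω →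
              ∀ N : ℕ, 1 ≤ N → ∀ f ∈ hermiteSpan n N,
                L2norm n f ≤ κ * (κt / γ) ^ (Ct * (N : ℝ) ^ (1 - ε / 2)) *
                  L2normOn n ω f := by
  refine ⟨2, by norm_num, ?_⟩
  intro ε m R γ hε hε1 _ hR hγ hγ1
  obtain ⟨L1, h1, h2, h3⟩ := choose_L1 n ε R hε hε1 hR
  set θ : ℝ := γ/10^n with hθ
  have hθ0 : 0 < θ := by positivity
  obtain ⟨Λ, K, hΛ, hK, H⟩ := core_est n θ L1 hθ0 h1 h2
  have hlog2 : 0 < Real.log 2 := Real.log_pos (by norm_num)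
  have hlogΛ : 0 ≤ Real.log Λ := Real.log_nonneg hΛ
  refine ⟨4 / Real.sqrt θ, 2*K*Real.log Λ/Real.log 2 + 1, by positivity, by positivity, ?_⟩
  intro ρ hρ _ _ hρR ω hω ht N hN f hf
  obtain ⟨J, M, hJ, hM, hMN, hNM, hM2, hJN, hNJ⟩ := params ε hε hε1 N hN
  obtain ⟨c, hc⟩ := span_expand n N f hf
  have hN1 : (1:ℝ) ≤ N := by exact_mod_cast hN
  have hN0 : (0:ℝ) < N := by linarith
  have hJ0 : (0:ℝ) < J := by exact_mod_cast hJ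
  have hsq : 0 < Real.sqrt N := Real.sqrt_pos.2 hN0
  have mp := PiLp.volume_preserving_toLp (Fin n)
  have me : MeasurableEmbedding (WithLp.toLp 2 : (Fin n → ℝ) → En n) := 
    (MeasurableEquiv.toLp 2 (Fin n → ℝ)).measurableEmbedding
  set ω' : Set (Fin n → ℝ) := WithLp.toLp 2 ⁻¹' ω with hω'
  have hω'm : MeasurableSet ω' := mp.measurable hω
  have hs0 : 0 < 2*(L1*Real.sqrt N)/J := by positivity
  have hest := H N J M hN hJ hM hMN hNM hNJ ω' hω'm (fun i => by
    refine thick_cube n γ hγ ρ hρ ω hω ht _ _ hs0 fun x hx => ?_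
    refine (hρR x).trans ?_
    have hxb : (WithLp.ofLp x : Fin n → ℝ) ∈ hbox n (L1*Real.sqrt N) := by
      rw [cube_union n J _ _ hs0 (by field_simp)]
      exact Set.mem_iUnion.2 ⟨i, hx⟩
    refine (rho_box n N hN ε R L1 hε hε1 hR h1 h3 x hxb).trans ?_
    rw [div_div, le_div_iff₀ (by positivity)]
    nlinarith) c
  have e1 : ∫ x, ‖f x‖^2 = hS n N c := by
    rw [← mp.integral_comp me (fun x => ‖f x‖^2), ← hF_norm]
    simp_rw [hc]
  have e2 : ∫ x in ω, ‖f x‖^2 = ∫ x in ω', ‖hF n N c x‖^2 := by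
    rw [hω', ← mp.setIntegral_preimage_emb me (fun x => ‖f x‖^2)]
    simp_rw [hc]
  have hI : 0 ≤ ∫ x in ω', ‖hF n N c x‖^2 := integral_nonneg fun x => by positivity
  have hpow : Λ^(K*M) ≤ (2/γ)^((2*K*Real.log Λ/Real.log 2 + 1) * (N:ℝ)^(1-ε/2)) := by
    have hΛ0 : 0 < Λ := by linarith
    have hp : 0 ≤ (N:ℝ)^(1-ε/2) := by positivity
    have h22 : 2 ≤ 2/γ := by rw [le_div_iff₀ hγ]; linarith
    calc Λ^(K*M) = Real.exp (Real.log Λ * ((K*M:ℕ):ℝ)) := by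
          rw [← Real.rpow_natCast, Real.rpow_def_of_pos hΛ0]
      _ ≤ Real.exp (Real.log 2 * ((2*K*Real.log Λ/Real.log 2 + 1) * (N:ℝ)^(1-ε/2))) := by
          apply Real.exp_le_exp.2
          push_cast
          have e : Real.log 2 * ((2*K*Real.log Λ/Real.log 2 + 1) * (N:ℝ)^(1-ε/2)) = 
            Real.log Λ * (K * (2*(N:ℝ)^(1-ε/2))) + Real.log 2 * (N:ℝ)^(1-ε/2) := by
            field_simp
          rw [e]
          have : Real.log Λ * (K * (M:ℝ)) ≤ Real.log Λ * (K * (2*(N:ℝ)^(1-ε/2))) := by gcongr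
          nlinarith
      _ = 2^((2*K*Real.log Λ/Real.log 2 + 1) * (N:ℝ)^(1-ε/2)) := by
          rw [Real.rpow_def_of_pos (show (0:ℝ) < 2 by norm_num)]
      _ ≤ _ := Real.rpow_le_rpow (by norm_num) h22 (by positivity)
  rw [L2norm, L2normOn, e1, e2]
  calc Real.sqrt (hS n N c) ≤ Real.sqrt (16/θ * (Λ^(K*M))^2 * ∫ x in ω', ‖hF n N c x‖^2) := Real.sqrt_le_sqrt hest
    _ = 4 / Real.sqrt θ * Λ^(K*M) * Real.sqrt (∫ x in ω', ‖hF n N c x‖^2) := by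
      rw [Real.sqrt_mul (by positivity), Real.sqrt_mul (by positivity), Real.sqrt_sq (by positivity), Real.sqrt_div (by norm_num),
        show (16:ℝ) = 4^2 by norm_num, Real.sqrt_sq (by norm_num)]
    _ ≤ _ := by gcongr

/-- **Spectral inequality for finite combinations of Hermite functions**
(Theorem "Spectral"): for control subsets that are γ-thick with respect to a
½-Lipschitz density ρ with m ≤ ρ(x) ≤ R⟨x⟩^{1-ε}. -/
theorem spectral_inequality_hermite (n : ℕ) :
    ∃ κt : ℝ, 1 < κt ∧
      ∀ ε m R γ : ℝ, 0 < ε → ε ≤ 1 → 0 < m → 0 < R → 0 < γ → γ ≤ 1 →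
        ∃ κ Ct : ℝ, 0 < κ ∧ 0 < Ct ∧
          ∀ ρ : En n → ℝ, (∀ x, 0 < ρ x) → LipschitzWith (1/2 : ℝ≥0) ρ →
            (∀ x, m ≤ ρ x) → (∀ x, ρ x ≤ R * jap n x ^ (1 - ε)) →
            ∀ ω : Set (En n), MeasurableSet ω → ThickWith n γ ρ ω →
              ∀ N : ℕ, 1 ≤ N → ∀ f ∈ hermiteSpan n N,
                L2norm n f ≤ κ * (κt / γ) ^ (Ct * (N : ℝ) ^ (1 - ε / 2)) *
                  L2normOn n ω f := by
  exact spectral_final n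

end
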